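/- Let dμ = e^{−V} dx and dν = e^{−W} dx be probability measures on ℝⁿ with V, W : ℝⁿ → ℝ twice continuously differentiable and V finite everywhere (so μ is supported on all of ℝⁿ). Suppose there exist α > 0, a symmetric positive semidefinite matrix A, and a symmetric positive definite matrix G such that Tr(A ∇²V(x)) ≤ α and ∇²W(x) ≥ G^{-1} for all x ∈ ℝⁿ. Let Φ : ℝⁿ → ℝ be a twice continuously differentiable convex function whose gradient ∇Φ pushes μ forward to ν (the Brenier map). Then Tr(A ∇²Φ(x)) ≤ √(α · Tr(AG)) for all x ∈ ℝⁿ, i.e. ‖div(A∇Φ)‖_{L^∞} ≤ √(α · Tr(AG)). -/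

import Mathlib

open MeasureTheory Matrix
open scoped ENNReal

noncomputable section

/-- The gradient of a function on `ℝⁿ`, as a vector of partial derivatives. -/
def gradVec {n : ℕ} (Φ : (Fin n → ℝ) → ℝ) (x : Fin n → ℝ) : Fin n → ℝ :=
  fun i => fderiv ℝ Φ x (Pi.single i 1)

/-- The Hessian of a function on `ℝⁿ`, as a matrix of second partial derivatives. -/
def hessMat {n : ℕ} (f : (Fin n → ℝ) → ℝ) (x : Fin n → ℝ) :
    Matrix (Fin n) (Fin n) ℝ :=
  Matrix.of fun i j => fderiv ℝ (fun y => fderiv ℝ f y (Pi.single j 1)) x (Pi.single i 1)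

/-!
Write `A = L Lᵀ` and `q = Tr(A ∇²Φ)`. Differentiating the Monge-Ampère equation
`log det ∇²Φ - W(∇Φ) = -V` twice along `A` gives, formally, `𝓛 q ≥ q² / Tr(AG) - α`, where
`𝓛 u = Tr((∇²Φ)⁻¹ ∇²u) - ∇W(∇Φ) ⬝ ∇u` is the linearised operator. It is symmetric with respect to
`e^{-V} dx`, so testing the inequality against a nondecreasing cutoff `γ(q)` supported beyond the
level `√(α Tr(AG))` leaves `∫ γ(q) (q² / Tr(AG) - α) e^{-V} ≤ 0`, and hence `q ≤ √(α Tr(AG))`.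

As `Φ` is only `C²`, second derivatives along `A` are replaced by the differences
`2 (∫ f (x + s L y) dρ(y) - f x) / (κ s²)`, to which concavity of `log det` and strong convexity of
`W` apply without any loss. Only the trace of `A ∇²V` is controlled, so the differences must be
isotropic: `ρ` is radial with `-y dρ` the gradient of `κ dσ` for a second radial measure `σ`, and
integrating by parts turns differences of `f` into `σ`-averages of `Tr(A ∇²f)`. The limit `s → 0` is
taken after the integration, by Fatou's lemma.
-/

open Filter Set Topology

section Calculus

lemma hasDerivAt_add_smul {E : Type*} [NormedAddCommGroup E] [NormedSpace ℝ E] (x v : E) (t : ℝ) :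
    HasDerivAt (fun s : ℝ => x + s • v) v t := by
  simpa using ((hasDerivAt_id t).smul_const v).const_add x

variable {n : ℕ} {f g : (Fin n → ℝ) → ℝ}

lemma fderiv_apply_eq_gradVec_dotProduct (f : (Fin n → ℝ) → ℝ) (x v : Fin n → ℝ) :
    fderiv ℝ f x v = gradVec f x ⬝ᵥ v := by
  conv_lhs => rw [pi_eq_sum_univ' v]
  simp [gradVec, dotProduct, mul_comm]

lemma gradVec_eq_of_fderiv {a x : Fin n → ℝ} (h : ∀ v, fderiv ℝ f x v = a ⬝ᵥ v) :
    gradVec f x = a :=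
  funext fun i => by rw [gradVec, h, dotProduct_single_one]

lemma contDiff_gradVec {m : ℕ∞} (hf : ContDiff ℝ (m + 1) f) : ContDiff ℝ m (gradVec f) :=
  contDiff_pi.2 fun _ => (hf.fderiv_right le_rfl).clm_apply contDiff_const

lemma continuous_gradVec (hf : ContDiff ℝ 1 f) : Continuous (gradVec f) :=
  (contDiff_gradVec (m := 0) (by simpa using hf)).continuous

lemma hasCompactSupport_gradVec (hf : HasCompactSupport f) : HasCompactSupport (gradVec f) :=
  (hf.fderiv ℝ).comp_left (g := fun (l : (Fin n → ℝ) →L[ℝ] ℝ) i => l (Pi.single i 1)) rfl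

lemma hasCompactSupport_dotProduct {α : Type*} [TopologicalSpace α] {X Y : α → Fin n → ℝ}
    (hX : HasCompactSupport X) : HasCompactSupport fun x => X x ⬝ᵥ Y x :=
  hX.mono fun x => by
    contrapose!
    simp +contextual

lemma hessMat_transpose (hf : ContDiff ℝ 2 f) (x : Fin n → ℝ) : (hessMat f x)ᵀ = hessMat f x := by
  have hd : DifferentiableAt ℝ (fderiv ℝ f) x :=
    (hf.fderiv_right (m := 1) (by norm_num)).differentiable one_ne_zero x
  have hsecond (v w : Fin n → ℝ) :
      fderiv ℝ (fun y => fderiv ℝ f y w) x v = fderiv ℝ (fderiv ℝ f) x v w := by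
    rw [fderiv_clm_apply hd (differentiableAt_const _)]
    simp
  ext i j
  simpa only [transpose_apply, hessMat, of_apply, hsecond] using
    hf.contDiffAt.isSymmSndFDerivAt (by simp) _ _

lemma fderiv_gradVec_apply (hf : ContDiff ℝ 2 f) (x v : Fin n → ℝ) :
    fderiv ℝ (gradVec f) x v = hessMat f x *ᵥ v := by
  have hd := (contDiff_gradVec (m := 1) hf).differentiable one_ne_zero x
  ext i
  rw [← hessMat_transpose hf, fderiv_pi fun i => differentiableAt_pi.1 hd i]
  exact fderiv_apply_eq_gradVec_dotProduct _ _ _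

lemma det_fderiv_gradVec (hf : ContDiff ℝ 2 f) (x : Fin n → ℝ) :
    (fderiv ℝ (gradVec f) x).det = (hessMat f x).det := by
  rw [← LinearMap.det_toLin', ContinuousLinearMap.det]
  congr 1
  exact LinearMap.ext fun v => by simp [fderiv_gradVec_apply hf]

lemma continuous_hessMat (hf : ContDiff ℝ 2 f) : Continuous (hessMat f) :=
  continuous_matrix fun _ j =>
    ((contDiff_pi.1 (contDiff_gradVec (m := 1) hf) j).continuous_fderiv one_ne_zero).clm_apply
      continuous_const

lemma hasDerivAt_line (hf : Differentiable ℝ f) (x v : Fin n → ℝ) (t : ℝ) :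
    HasDerivAt (fun s : ℝ => f (x + s • v)) (gradVec f (x + t • v) ⬝ᵥ v) t := by
  rw [← fderiv_apply_eq_gradVec_dotProduct]
  exact (hf _).hasFDerivAt.comp_hasDerivAt t (hasDerivAt_add_smul x v t)

lemma hasDerivAt_gradVec_line (hf : ContDiff ℝ 2 f) (x v : Fin n → ℝ) (t : ℝ) :
    HasDerivAt (fun s : ℝ => gradVec f (x + s • v) ⬝ᵥ v)
      (v ⬝ᵥ (hessMat f (x + t • v) *ᵥ v)) t := by
  have hd := (contDiff_gradVec (m := 1) hf).differentiable one_ne_zero (x + t • v)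
  have h := hasDerivAt_pi.1 (hd.hasFDerivAt.comp_hasDerivAt t (hasDerivAt_add_smul x v t))
  rw [dotProduct_comm, ← fderiv_gradVec_apply hf]
  simpa [dotProduct] using HasDerivAt.fun_sum fun i (_ : i ∈ Finset.univ) => (h i).mul_const (v i)

lemma gradVec_const_mul_sub (c : ℝ) {x : Fin n → ℝ} (hf : DifferentiableAt ℝ f x)
    (hg : DifferentiableAt ℝ g x) :
    gradVec (fun y => c * (f y - g y)) x = c • (gradVec f x - gradVec g x) :=
  gradVec_eq_of_fderiv fun v => by
    simp [fderiv_const_mul (hf.fun_sub hg), fderiv_fun_sub hf hg,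
      fderiv_apply_eq_gradVec_dotProduct, sub_dotProduct]

lemma hessMat_const_mul_sub (c : ℝ) (hf : ContDiff ℝ 2 f) (hg : ContDiff ℝ 2 g) (x : Fin n → ℝ) :
    hessMat (fun y => c * (f y - g y)) x = c • (hessMat f x - hessMat g x) := by
  have hd {f : (Fin n → ℝ) → ℝ} (hf : ContDiff ℝ 2 f) (j : Fin n) :
      DifferentiableAt ℝ (fun y => gradVec f y j) x :=
    (contDiff_pi.1 (contDiff_gradVec (m := 1) hf) j).differentiable one_ne_zero x
  ext i j
  change gradVec (fun y => gradVec (fun y => c * (f y - g y)) y j) x i = _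
  simp only [gradVec_const_mul_sub c (hf.differentiable two_ne_zero _)
    (hg.differentiable two_ne_zero _), Pi.smul_apply, Pi.sub_apply, smul_eq_mul]
  rw [gradVec_const_mul_sub c (hd hf j) (hd hg j)]
  rfl

lemma gradVec_mul {x : Fin n → ℝ} (hf : DifferentiableAt ℝ f x) (hg : DifferentiableAt ℝ g x) :
    gradVec (fun y => f y * g y) x = f x • gradVec g x + g x • gradVec f x :=
  gradVec_eq_of_fderiv fun v => by
    simp [fderiv_fun_mul hf hg, fderiv_apply_eq_gradVec_dotProduct, add_dotProduct]

lemma gradVec_comp {γ : ℝ → ℝ} {x : Fin n → ℝ} (hγ : DifferentiableAt ℝ γ (f x))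
    (hf : DifferentiableAt ℝ f x) :
    gradVec (fun y => γ (f y)) x = deriv γ (f x) • gradVec f x :=
  gradVec_eq_of_fderiv fun v => by
    simp [fderiv_fun_comp x hγ hf, fderiv_apply_eq_gradVec_dotProduct, mul_comm]

lemma gradVec_comp_gradVec {x : Fin n → ℝ} (hf : DifferentiableAt ℝ f (gradVec g x))
    (hg : ContDiff ℝ 2 g) :
    gradVec (fun y => f (gradVec g y)) x = hessMat g x *ᵥ gradVec f (gradVec g x) :=
  gradVec_eq_of_fderiv fun v => by
    rw [fderiv_fun_comp x hf ((contDiff_gradVec (m := 1) hg).differentiable one_ne_zero x),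
      ContinuousLinearMap.comp_apply, fderiv_gradVec_apply hg, fderiv_apply_eq_gradVec_dotProduct,
      dotProduct_mulVec, ← mulVec_transpose, hessMat_transpose hg]

end Calculus

section Convexity

variable {n : ℕ} {Φ : (Fin n → ℝ) → ℝ}

lemma monotone_gradVec_line (hconv : ConvexOn ℝ univ Φ) (hΦ : Differentiable ℝ Φ)
    (x v : Fin n → ℝ) : Monotone fun t : ℝ => gradVec Φ (x + t • v) ⬝ᵥ v := by
  have hd := hasDerivAt_line hΦ x v
  have hline : ConvexOn ℝ univ fun t : ℝ => Φ (x + t • v) :=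
    (hconv.comp_affineMap (AffineMap.lineMap x (x + v))).congr fun t _ => by
      simp [AffineMap.lineMap_apply, add_comm]
  rw [← funext fun t => (hd t).deriv]
  exact monotoneOn_univ.1 (hline.monotoneOn_deriv fun t _ => (hd t).differentiableAt)

lemma add_gradVec_dotProduct_sub_le (hconv : ConvexOn ℝ univ Φ) (hΦ : Differentiable ℝ Φ)
    (x y : Fin n → ℝ) : Φ x + gradVec Φ x ⬝ᵥ (y - x) ≤ Φ y := by
  have hd := hasDerivAt_line hΦ x (y - x)
  obtain ⟨c, hc, hslope⟩ := exists_hasDerivAt_eq_slope (fun t : ℝ => Φ (x + t • (y - x))) _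
    zero_lt_one (fun t _ => (hd t).continuousAt.continuousWithinAt) fun t _ => hd t
  have hmono := monotone_gradVec_line hconv hΦ x (y - x) hc.1.le
  simp only [zero_smul, add_zero, one_smul, sub_zero, div_one, add_sub_cancel] at hmono hslope
  linarith

lemma posSemidef_hessMat (hconv : ConvexOn ℝ univ Φ) (hΦ : ContDiff ℝ 2 Φ)
    (x : Fin n → ℝ) : (hessMat Φ x).PosSemidef := by
  refine .of_dotProduct_mulVec_nonneg (hessMat_transpose hΦ x) fun v => ?_
  have hmono := monotone_gradVec_line hconv (hΦ.differentiable two_ne_zero) x v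
  simpa [(hasDerivAt_gradVec_line hΦ x v 0).deriv] using hmono.deriv_nonneg (x := 0)

lemma eq_of_gradVec_eq (hconv : ConvexOn ℝ univ Φ) (hΦ : ContDiff ℝ 2 Φ) {x y : Fin n → ℝ}
    (hpos : (hessMat Φ x).PosDef) (hxy : gradVec Φ x = gradVec Φ y) : x = y := by
  have hmono := monotone_gradVec_line hconv (hΦ.differentiable two_ne_zero) x (y - x)
  have hconst (t : ℝ) (ht : t ∈ Icc (0 : ℝ) 1) :
      gradVec Φ (x + t • (y - x)) ⬝ᵥ (y - x) = gradVec Φ x ⬝ᵥ (y - x) := by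
    have hleft := hmono ht.1
    have hright := hmono ht.2
    simp only [zero_smul, add_zero, one_smul, add_sub_cancel, ← hxy] at hleft hright
    exact le_antisymm hright hleft
  have hderiv := (uniqueDiffOn_Icc (zero_lt_one' ℝ) 0 (by simp)).eq_deriv _
    (hasDerivAt_gradVec_line hΦ x (y - x) 0).hasDerivWithinAt
    ((hasDerivWithinAt_const (0 : ℝ) _ (gradVec Φ x ⬝ᵥ (y - x))).congr hconst (by simp))
  by_contra hne
  refine (hpos.dotProduct_mulVec_pos (sub_ne_zero.2 (Ne.symm hne))).ne' ?_
  simpa using hderiv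

lemma convex_eq_univ_of_dense {E : Type*} [NormedAddCommGroup E] [NormedSpace ℝ E]
    [FiniteDimensional ℝ E] {s : Set E} (hs : Convex ℝ s) (hd : Dense s) : s = univ := by
  have hspan : affineSpan ℝ s = ⊤ := by
    rw [← AffineSubspace.coe_eq_univ_iff, ← univ_subset_iff, ← hd.closure_eq]
    exact closure_minimal (subset_affineSpan ℝ s) (AffineSubspace.closed_of_finiteDimensional _)
  have hint := hs.interior_closure_eq_interior_of_nonempty_interior
    (hs.interior_nonempty_iff_affineSpan_eq_top.2 hspan)
  rw [hd.closure_eq, interior_univ] at hint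
  exact univ_subset_iff.1 (hint.trans_subset interior_subset)

/-- The effective domain of the convex conjugate of `f`, that is, the set of slopes of the affine
minorants of `f`. -/
def conjugateDomain (f : (Fin n → ℝ) → ℝ) : Set (Fin n → ℝ) :=
  {p | ∃ C, ∀ x, p ⬝ᵥ x - C ≤ f x}

lemma convex_conjugateDomain (f : (Fin n → ℝ) → ℝ) : Convex ℝ (conjugateDomain f) := by
  rintro p ⟨C, hC⟩ q ⟨D, hD⟩ a b ha hb hab
  refine ⟨a * C + b * D, fun x => ?_⟩
  have hp := mul_le_mul_of_nonneg_left (hC x) ha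
  have hq := mul_le_mul_of_nonneg_left (hD x) hb
  rw [add_dotProduct, smul_dotProduct, smul_dotProduct, smul_eq_mul, smul_eq_mul]
  linear_combination hp + hq + f x * hab

lemma gradVec_mem_conjugateDomain (hconv : ConvexOn ℝ univ Φ) (hΦ : Differentiable ℝ Φ)
    (x : Fin n → ℝ) : gradVec Φ x ∈ conjugateDomain Φ :=
  ⟨gradVec Φ x ⬝ᵥ x - Φ x, fun y => by
    have := add_gradVec_dotProduct_sub_le hconv hΦ x y
    rw [dotProduct_sub] at this
    linarith⟩

lemma exists_mul_norm_sub_le {f : (Fin n → ℝ) → ℝ} (hf : conjugateDomain f = univ) {r : ℝ}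
    (hr : 0 < r) : ∃ C, ∀ x, r * ‖x‖ - C ≤ f x := by
  have hslope (p : Fin n → ℝ) : ∃ C, ∀ x, p ⬝ᵥ x - C ≤ f x := hf.superset (mem_univ p)
  obtain ⟨C₀, hC₀⟩ := hslope 0
  choose C hC using fun i => hslope (Pi.single i r)
  choose D hD using fun i => hslope (Pi.single i (-r))
  obtain ⟨M, hM⟩ := Finite.exists_le fun i => max (C i) (D i)
  refine ⟨max C₀ M, fun x => ?_⟩
  have hbound : ‖x‖ ≤ (f x + max C₀ M) / r := by
    have h₀ := hC₀ x
    rw [zero_dotProduct] at h₀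
    refine (pi_norm_le_iff_of_nonneg ?_).2 fun i => ?_
    · exact div_nonneg (by linarith [le_max_left C₀ M]) hr.le
    · have h₁ := hC i x
      have h₂ := hD i x
      rw [single_dotProduct] at h₁ h₂
      have := max_le_iff.1 (hM i)
      rw [le_div_iff₀ hr, Real.norm_eq_abs, mul_comm, ← abs_of_pos hr, ← abs_mul]
      exact abs_le'.2 ⟨by linarith [le_max_right C₀ M], by linarith [le_max_right C₀ M]⟩
  rw [le_div_iff₀ hr] at hbound
  linarith

lemma gradVec_surjective (hΦ : Differentiable ℝ Φ) (hdom : conjugateDomain Φ = univ) :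
    Function.Surjective (gradVec Φ) := by
  intro p
  have hdom' : conjugateDomain (fun x => Φ x - p ⬝ᵥ x) = univ := eq_univ_of_forall fun q => by
    obtain ⟨C, hC⟩ := hdom.superset (mem_univ (p + q))
    refine ⟨C, fun x => ?_⟩
    have := hC x
    rw [add_dotProduct] at this
    linarith
  obtain ⟨C, hC⟩ := exists_mul_norm_sub_le hdom' one_pos
  have hlim : Tendsto (fun x => Φ x - p ⬝ᵥ x) (cocompact _) atTop :=
    tendsto_atTop_mono hC (tendsto_atTop_add_const_right _ (-C)
      (tendsto_norm_cocompact_atTop.const_mul_atTop one_pos))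
  obtain ⟨x, hx⟩ := (hΦ.continuous.sub (continuous_const.dotProduct continuous_id)).exists_forall_le
    hlim
  refine ⟨x, gradVec_eq_of_fderiv fun v => ?_⟩
  rw [fderiv_apply_eq_gradVec_dotProduct]
  have hderiv : HasDerivAt (fun t : ℝ => Φ (x + t • v) - (p ⬝ᵥ x + t * p ⬝ᵥ v))
      (gradVec Φ x ⬝ᵥ v - p ⬝ᵥ v) 0 := by
    simpa using (hasDerivAt_line hΦ x v 0).fun_sub
      (((hasDerivAt_id 0).mul_const _).const_add (p ⬝ᵥ x))
  have hmin : IsLocalMin (fun t : ℝ => Φ (x + t • v) - (p ⬝ᵥ x + t * p ⬝ᵥ v)) 0 :=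
    .of_forall fun t => by simpa using hx (x + t • v)
  exact sub_eq_zero.1 (hmin.hasDerivAt_eq_zero hderiv)

lemma gradVec_surjective_of_denseRange (hconv : ConvexOn ℝ univ Φ) (hΦ : Differentiable ℝ Φ)
    (hd : DenseRange (gradVec Φ)) : Function.Surjective (gradVec Φ) :=
  gradVec_surjective hΦ <| convex_eq_univ_of_dense (convex_conjugateDomain Φ) <|
    hd.mono <| range_subset_iff.2 (gradVec_mem_conjugateDomain hconv hΦ)

end Convexity

section MongeAmpere

variable {n : ℕ} {V W Φ : (Fin n → ℝ) → ℝ}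

/-- The measure `e^{-V} dx`. It is not assumed to be normalised. -/
abbrev gibbs (V : (Fin n → ℝ) → ℝ) : Measure (Fin n → ℝ) :=
  volume.withDensity fun x => ENNReal.ofReal (Real.exp (-V x))

lemma measurable_ofReal_exp_neg (hV : Continuous V) :
    Measurable fun x => ENNReal.ofReal (Real.exp (-V x)) :=
  (Real.continuous_exp.comp hV.neg).measurable.ennreal_ofReal

lemma volume_absolutelyContinuous_gibbs (hV : Continuous V) : volume ≪ gibbs V :=
  withDensity_absolutelyContinuous' (measurable_ofReal_exp_neg hV).aemeasurable
    (.of_forall fun x => by simp [Real.exp_pos])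

lemma denseRange_of_map_eq_gibbs {T : (Fin n → ℝ) → Fin n → ℝ} {μ : Measure (Fin n → ℝ)}
    (hW : Continuous W) (hT : Measurable T) (hmap : μ.map T = gibbs W) : DenseRange T := by
  refine dense_iff_inter_open.2 fun O hO hne => ?_
  have hpos : gibbs W O ≠ 0 := fun h =>
    hO.measure_ne_zero volume hne (volume_absolutelyContinuous_gibbs hW h)
  rw [← hmap, Measure.map_apply hT hO.measurableSet] at hpos
  obtain ⟨x, hx⟩ := nonempty_of_measure_ne_zero hpos
  exact ⟨T x, hx, x, rfl⟩

/-- `Φ` is a `C²` Brenier potential from `e^{-V} dx` to `e^{-W} dx`: it is convex and its gradient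
pushes the first measure forward to the second. -/
structure IsBrenierPotential (V W Φ : (Fin n → ℝ) → ℝ) : Prop where
  contDiff : ContDiff ℝ 2 Φ
  convexOn : ConvexOn ℝ univ Φ
  map_gradVec : (gibbs V).map (gradVec Φ) = gibbs W

namespace IsBrenierPotential

lemma differentiable (h : IsBrenierPotential V W Φ) : Differentiable ℝ Φ :=
  h.contDiff.differentiable two_ne_zero

protected lemma contDiff_gradVec (h : IsBrenierPotential V W Φ) : ContDiff ℝ 1 (gradVec Φ) :=
  contDiff_gradVec (m := 1) h.contDiff

protected lemma continuous_gradVec (h : IsBrenierPotential V W Φ) : Continuous (gradVec Φ) :=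
  h.contDiff_gradVec.continuous

lemma hasFDerivAt_gradVec (h : IsBrenierPotential V W Φ) (x : Fin n → ℝ) :
    HasFDerivAt (gradVec Φ) (fderiv ℝ (gradVec Φ) x) x :=
  (h.contDiff_gradVec.differentiable one_ne_zero x).hasFDerivAt

lemma volume_det_hessMat_eq_zero (h : IsBrenierPotential V W Φ) (hV : Continuous V) :
    volume {x | (hessMat Φ x).det = 0} = 0 := by
  have himage : volume (gradVec Φ '' {x | (hessMat Φ x).det = 0}) = 0 :=
    addHaar_image_eq_zero_of_det_fderivWithin_eq_zero volume
      (fun x _ => (h.hasFDerivAt_gradVec x).hasFDerivWithinAt)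
      fun x hx => (det_fderiv_gradVec h.contDiff x).trans hx
  have hmp : MeasurePreserving (gradVec Φ) (gibbs V) (gibbs W) :=
    ⟨h.continuous_gradVec.measurable, h.map_gradVec⟩
  have hpre := hmp.quasiMeasurePreserving.preimage_null
    (withDensity_absolutelyContinuous _ _ himage)
  exact volume_absolutelyContinuous_gibbs hV (measure_mono_null (subset_preimage_image _ _) hpre)

lemma setLIntegral_det_hessMat (h : IsBrenierPotential V W Φ) {s : Set (Fin n → ℝ)}
    (hs : MeasurableSet s) (hdet : ∀ x ∈ s, (hessMat Φ x).det ≠ 0) :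
    ∫⁻ x in s, ENNReal.ofReal |(hessMat Φ x).det| * ENNReal.ofReal (Real.exp (-W (gradVec Φ x))) =
      gibbs V s := by
  have hinj {x y : Fin n → ℝ} (hx : x ∈ s) (hxy : gradVec Φ x = gradVec Φ y) : x = y :=
    eq_of_gradVec_eq h.convexOn h.contDiff
      ((posSemidef_hessMat h.convexOn h.contDiff x).posDef_iff_det_ne_zero.2 (hdet x hx)) hxy
  have hinjOn : InjOn (gradVec Φ) s := fun x hx y _ => hinj hx
  have himage : MeasurableSet (gradVec Φ '' s) :=
    hs.image_of_continuousOn_injOn h.continuous_gradVec.continuousOn hinjOn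
  have hpre : gradVec Φ ⁻¹' (gradVec Φ '' s) = s := by
    refine Subset.antisymm ?_ (subset_preimage_image _ s)
    rintro y ⟨x, hx, hxy⟩
    rwa [← hinj hx hxy]
  simp only [← det_fderiv_gradVec h.contDiff]
  rw [← lintegral_image_eq_lintegral_abs_det_fderiv_mul volume hs
    (fun x _ => (h.hasFDerivAt_gradVec x).hasFDerivWithinAt) hinjOn
    (fun y => ENNReal.ofReal (Real.exp (-W y))), ← withDensity_apply _ himage]
  change gibbs W _ = _
  rw [← h.map_gradVec, Measure.map_apply h.continuous_gradVec.measurable himage, hpre]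

lemma ae_det_hessMat_mul_exp (h : IsBrenierPotential V W Φ) (hV : Continuous V)
    (hW : Continuous W) : ∀ᵐ x, ENNReal.ofReal |(hessMat Φ x).det| *
      ENNReal.ofReal (Real.exp (-W (gradVec Φ x))) = ENNReal.ofReal (Real.exp (-V x)) := by
  have hdet : Continuous fun x => (hessMat Φ x).det := (continuous_hessMat h.contDiff).matrix_det
  have hU : MeasurableSet {x | (hessMat Φ x).det ≠ 0} :=
    (isOpen_ne_fun hdet continuous_const).measurableSet
  have hUae : ({x | (hessMat Φ x).det ≠ 0} : Set (Fin n → ℝ)) =ᵐ[volume] univ :=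
    ae_eq_univ.2 (by simpa [compl_ofPred] using h.volume_det_hessMat_eq_zero hV)
  refine ae_eq_of_forall_setLIntegral_eq_of_sigmaFinite (hdet.abs.measurable.ennreal_ofReal.mul
    (measurable_ofReal_exp_neg (hW.comp h.continuous_gradVec))) (measurable_ofReal_exp_neg hV)
    fun s hs _ => ?_
  have hres : (volume : Measure (Fin n → ℝ)).restrict s =
      volume.restrict (s ∩ {x | (hessMat Φ x).det ≠ 0}) :=
    Measure.restrict_congr_set (by simpa using ((ae_eq_refl s).inter hUae).symm)
  rw [hres, h.setLIntegral_det_hessMat (hs.inter hU) fun x hx => hx.2,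
    withDensity_apply _ (hs.inter hU)]

lemma det_hessMat_mul_exp (h : IsBrenierPotential V W Φ) (hV : Continuous V) (hW : Continuous W)
    (x : Fin n → ℝ) :
    (hessMat Φ x).det * Real.exp (-W (gradVec Φ x)) = Real.exp (-V x) := by
  have hae : (fun x => (hessMat Φ x).det * Real.exp (-W (gradVec Φ x))) =ᵐ[volume]
      fun x => Real.exp (-V x) := by
    filter_upwards [h.ae_det_hessMat_mul_exp hV hW] with x hx
    rwa [← ENNReal.ofReal_mul (abs_nonneg _),
      ENNReal.ofReal_eq_ofReal_iff (by positivity) (by positivity),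
      abs_of_nonneg (posSemidef_hessMat h.convexOn h.contDiff x).det_nonneg] at hx
  exact congrFun ((Continuous.ae_eq_iff_eq volume ((continuous_hessMat h.contDiff).matrix_det.mul
    (Real.continuous_exp.comp (hW.comp h.continuous_gradVec).neg))
    (Real.continuous_exp.comp hV.neg)).1 hae) x

lemma posDef_hessMat (h : IsBrenierPotential V W Φ) (hV : Continuous V) (hW : Continuous W)
    (x : Fin n → ℝ) : (hessMat Φ x).PosDef := by
  refine (posSemidef_hessMat h.convexOn h.contDiff x).posDef_iff_det_ne_zero.2 fun hdet => ?_
  have := h.det_hessMat_mul_exp hV hW x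
  rw [hdet, zero_mul] at this
  exact (Real.exp_pos _).ne this

lemma log_det_hessMat (h : IsBrenierPotential V W Φ) (hV : Continuous V) (hW : Continuous W)
    (x : Fin n → ℝ) : Real.log (hessMat Φ x).det = W (gradVec Φ x) - V x := by
  have := congrArg Real.log (h.det_hessMat_mul_exp hV hW x)
  rw [Real.log_mul (h.posDef_hessMat hV hW x).det_pos.ne' (Real.exp_pos _).ne', Real.log_exp,
    Real.log_exp] at this
  linarith

lemma bijective_gradVec (h : IsBrenierPotential V W Φ) (hV : Continuous V) (hW : Continuous W) :
    Function.Bijective (gradVec Φ) :=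
  ⟨fun x _ => eq_of_gradVec_eq h.convexOn h.contDiff (h.posDef_hessMat hV hW x),
    gradVec_surjective_of_denseRange h.convexOn h.differentiable
      (denseRange_of_map_eq_gibbs hW h.continuous_gradVec.measurable h.map_gradVec)⟩

lemma exists_homeomorph (h : IsBrenierPotential V W Φ) (hV : Continuous V) (hW : Continuous W) :
    ∃ e : (Fin n → ℝ) ≃ₜ (Fin n → ℝ), ⇑e = gradVec Φ ∧ ContDiff ℝ 1 e.symm := by
  have hdet (x : Fin n → ℝ) : (fderiv ℝ (gradVec Φ) x).det ≠ 0 :=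
    (det_fderiv_gradVec h.contDiff x).trans_ne (h.posDef_hessMat hV hW x).det_pos.ne'
  have hopen : IsOpenMap (gradVec Φ) :=
    isOpenMap_of_hasStrictFDerivAt_equiv
      (f' := fun x => (fderiv ℝ (gradVec Φ) x).toContinuousLinearEquivOfDetNeZero (hdet x))
      fun x => h.contDiff_gradVec.hasStrictFDerivAt one_ne_zero
  let e := (Equiv.ofBijective _ (h.bijective_gradVec hV hW)).toHomeomorphOfContinuousOpen
    h.continuous_gradVec hopen
  exact ⟨e, rfl, e.contDiff_symm (f₀' := fun x =>
    (fderiv ℝ (gradVec Φ) x).toContinuousLinearEquivOfDetNeZero (hdet x))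
    h.hasFDerivAt_gradVec h.contDiff_gradVec⟩

lemma fderiv_symm_apply (h : IsBrenierPotential V W Φ) (hV : Continuous V) (hW : Continuous W)
    {e : (Fin n → ℝ) ≃ₜ (Fin n → ℝ)} (he : ⇑e = gradVec Φ) (he' : ContDiff ℝ 1 e.symm)
    (p v : Fin n → ℝ) :
    fderiv ℝ e.symm p v = (hessMat Φ (e.symm p))⁻¹ *ᵥ v := by
  have hid : gradVec Φ ∘ e.symm = id := he ▸ e.self_comp_symm
  have hchain := fderiv_comp p (h.hasFDerivAt_gradVec (e.symm p)).differentiableAt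
    (he'.differentiable one_ne_zero p)
  rw [hid, fderiv_id] at hchain
  have hv : v = hessMat Φ (e.symm p) *ᵥ fderiv ℝ e.symm p v :=
    (DFunLike.congr_fun hchain v).trans (fderiv_gradVec_apply h.contDiff _ _)
  rw [hv, mulVec_mulVec, nonsing_inv_mul _ (h.posDef_hessMat hV hW _).det_pos.ne'.isUnit,
    one_mulVec, ← hv]

end IsBrenierPotential

end MongeAmpere

section LinearizedOperator

variable {n : ℕ} {V W Φ u : (Fin n → ℝ) → ℝ}

lemma continuous_nonsing_inv {X ι : Type*} [TopologicalSpace X] [Fintype ι] [DecidableEq ι]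
    {B : X → Matrix ι ι ℝ} (hB : Continuous B) (hdet : ∀ x, (B x).det ≠ 0) :
    Continuous fun x => (B x)⁻¹ := by
  simp_rw [inv_def, Ring.inverse_eq_inv']
  exact (hB.matrix_det.inv₀ hdet).smul hB.matrix_adjugate

lemma integral_gradVec_dotProduct {θ : (Fin n → ℝ) → ℝ} {X : (Fin n → ℝ) → Fin n → ℝ}
    (hθ : ContDiff ℝ 1 θ) (hθs : HasCompactSupport θ) (hX : ContDiff ℝ 1 X) :
    ∫ p, gradVec θ p ⬝ᵥ X p = -∫ p, θ p * ∑ i, fderiv ℝ X p (Pi.single i 1) i := by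
  have hXi (i : Fin n) : ContDiff ℝ 1 fun p => X p i := contDiff_pi.1 hX i
  have hfderiv (p : Fin n → ℝ) (i : Fin n) :
      fderiv ℝ X p (Pi.single i 1) i = fderiv ℝ (fun p => X p i) p (Pi.single i 1) := by
    rw [fderiv_pi fun i => (hXi i).differentiable one_ne_zero p]
    rfl
  have hleft (i : Fin n) : Integrable fun p => fderiv ℝ θ p (Pi.single i 1) * X p i :=
    (((hθ.continuous_fderiv one_ne_zero).clm_apply continuous_const).mul
      (hXi i).continuous).integrable_of_hasCompactSupport (hθs.fderiv_apply ℝ _).mul_right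
  have hright (i : Fin n) :
      Integrable fun p => θ p * fderiv ℝ (fun p => X p i) p (Pi.single i 1) :=
    (hθ.continuous.mul (((hXi i).continuous_fderiv one_ne_zero).clm_apply
      continuous_const)).integrable_of_hasCompactSupport hθs.mul_right
  simp only [dotProduct, gradVec, hfderiv, Finset.mul_sum]
  rw [integral_finsetSum _ fun i _ => hleft i, integral_finsetSum _ fun i _ => hright i,
    ← Finset.sum_neg_distrib]
  refine Finset.sum_congr rfl fun i _ => ?_
  rw [integral_mul_fderiv_eq_neg_fderiv_mul_of_integrable (hleft i) (hright i)
    ((hθ.continuous.mul (hXi i).continuous).integrable_of_hasCompactSupport hθs.mul_right)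
    (fun p _ => hθ.differentiable one_ne_zero p) (fun p _ => (hXi i).differentiable one_ne_zero p),
    neg_neg]

lemma integral_gibbs (hW : Continuous W) (f : (Fin n → ℝ) → ℝ) :
    ∫ x, f x ∂gibbs W = ∫ x, Real.exp (-W x) * f x := by
  rw [integral_withDensity_eq_integral_toReal_smul (measurable_ofReal_exp_neg hW)
    (.of_forall fun x => ENNReal.ofReal_lt_top)]
  simp [ENNReal.toReal_ofReal, Real.exp_nonneg]

lemma integral_gradVec_dotProduct_gibbs {g : (Fin n → ℝ) → ℝ} {X : (Fin n → ℝ) → Fin n → ℝ}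
    (hW : ContDiff ℝ 1 W) (hg : ContDiff ℝ 1 g) (hgs : HasCompactSupport g)
    (hX : ContDiff ℝ 1 X) :
    ∫ p, gradVec g p ⬝ᵥ X p ∂gibbs W =
      -∫ p, g p * (∑ i, fderiv ℝ X p (Pi.single i 1) i - gradVec W p ⬝ᵥ X p) ∂gibbs W := by
  have hexp : ContDiff ℝ 1 fun p => Real.exp (-W p) := hW.neg.exp
  have hibp := integral_gradVec_dotProduct (hexp.mul hg) hgs.mul_left hX
  have hgrad (p : Fin n → ℝ) : gradVec (fun p => Real.exp (-W p) * g p) p =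
      Real.exp (-W p) • gradVec g p - (Real.exp (-W p) * g p) • gradVec W p := by
    have hγ : HasDerivAt (fun t => Real.exp (-t)) (-Real.exp (-W p)) (W p) := by
      simpa using (hasDerivAt_neg (W p)).exp
    rw [gradVec_mul (hexp.differentiable one_ne_zero p) (hg.differentiable one_ne_zero p),
      gradVec_comp hγ.differentiableAt (hW.differentiable one_ne_zero p), hγ.deriv]
    module
  have hint₁ : Integrable fun p => Real.exp (-W p) * (gradVec g p ⬝ᵥ X p) :=
    (hexp.continuous.mul ((continuous_gradVec hg).dotProduct
      hX.continuous)).integrable_of_hasCompactSupport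
      (hasCompactSupport_dotProduct (hasCompactSupport_gradVec hgs)).mul_left
  have hint₂ : Integrable fun p => Real.exp (-W p) * g p * (gradVec W p ⬝ᵥ X p) :=
    ((hexp.continuous.mul hg.continuous).mul ((continuous_gradVec hW).dotProduct
      hX.continuous)).integrable_of_hasCompactSupport hgs.mul_left.mul_right
  have hdiv : Continuous fun p => ∑ i, fderiv ℝ X p (Pi.single i 1) i := by
    have := hX.continuous_fderiv one_ne_zero
    fun_prop
  have hint₃ : Integrable fun p => Real.exp (-W p) * g p * ∑ i, fderiv ℝ X p (Pi.single i 1) i :=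
    ((hexp.continuous.mul hg.continuous).mul hdiv).integrable_of_hasCompactSupport
      hgs.mul_left.mul_right
  simp only [hgrad, sub_dotProduct, smul_dotProduct, smul_eq_mul] at hibp
  rw [integral_sub hint₁ hint₂] at hibp
  simp only [integral_gibbs hW.continuous, ← mul_assoc, mul_sub]
  rw [integral_sub hint₃ hint₂]
  linarith

/-- The linearisation `Tr((∇²Φ)⁻¹ ∇²u) - ∇W(∇Φ) ⬝ ∇u` at `Φ` of the Monge-Ampère operator
`log det ∇²Φ - W(∇Φ)`. -/
def linearizedMA (W Φ u : (Fin n → ℝ) → ℝ) (x : Fin n → ℝ) : ℝ :=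
  ((hessMat Φ x)⁻¹ * hessMat u x).trace - gradVec W (gradVec Φ x) ⬝ᵥ gradVec u x

namespace IsBrenierPotential

lemma continuous_linearizedMA (h : IsBrenierPotential V W Φ) (hV : Continuous V)
    (hW : ContDiff ℝ 1 W) (hu : ContDiff ℝ 2 u) : Continuous (linearizedMA W Φ u) := by
  have hinv := continuous_nonsing_inv (continuous_hessMat h.contDiff) fun x =>
    (h.posDef_hessMat hV hW.continuous x).det_pos.ne'
  have hgradW : Continuous (gradVec W) := continuous_gradVec hW
  exact (hinv.matrix_mul (continuous_hessMat hu)).matrix_trace.sub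
    ((hgradW.comp h.continuous_gradVec).dotProduct (contDiff_gradVec (m := 1) hu).continuous)

lemma integral_comp_symm (h : IsBrenierPotential V W Φ) {e : (Fin n → ℝ) ≃ₜ (Fin n → ℝ)}
    (he : ⇑e = gradVec Φ) (f : (Fin n → ℝ) → ℝ) :
    ∫ p, f (e.symm p) ∂gibbs W = ∫ x, f x ∂gibbs V := by
  rw [← h.map_gradVec, ← he, e.measurableEmbedding.integral_map]
  simp

/-- The operator `linearizedMA W Φ` is symmetric with respect to `e^{-V} dx`: in the target
coordinates `p = ∇Φ(x)` it is the divergence, weighted by `e^{-W} dp`, of `∇u`. -/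
lemma integral_mul_linearizedMA (h : IsBrenierPotential V W Φ) (hV : Continuous V)
    (hW : ContDiff ℝ 1 W) {f : (Fin n → ℝ) → ℝ} (hf : ContDiff ℝ 1 f) (hfs : HasCompactSupport f)
    (hu : ContDiff ℝ 2 u) :
    ∫ x, f x * linearizedMA W Φ u x ∂gibbs V =
      -∫ x, gradVec f x ⬝ᵥ ((hessMat Φ x)⁻¹ *ᵥ gradVec u x) ∂gibbs V := by
  obtain ⟨e, he, he'⟩ := h.exists_homeomorph hV hW.continuous
  have hgradu : ContDiff ℝ 1 (gradVec u) := contDiff_gradVec (m := 1) hu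
  have hinvT (x : Fin n → ℝ) : ((hessMat Φ x)⁻¹)ᵀ = (hessMat Φ x)⁻¹ := by
    rw [transpose_nonsing_inv, hessMat_transpose h.contDiff]
  have hibp := integral_gradVec_dotProduct_gibbs hW (hf.comp he') (hfs.comp_homeomorph e.symm)
    (hgradu.comp he')
  have hgrad (p : Fin n → ℝ) :
      gradVec (f ∘ e.symm) p = (hessMat Φ (e.symm p))⁻¹ *ᵥ gradVec f (e.symm p) :=
    gradVec_eq_of_fderiv fun v => by
      rw [fderiv_comp p (hf.differentiable one_ne_zero _) (he'.differentiable one_ne_zero p),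
        ContinuousLinearMap.comp_apply, h.fderiv_symm_apply hV hW.continuous he he',
        fderiv_apply_eq_gradVec_dotProduct, dotProduct_mulVec, ← mulVec_transpose, hinvT]
  have hdiv (p : Fin n → ℝ) : ∑ i, fderiv ℝ (gradVec u ∘ e.symm) p (Pi.single i 1) i =
      ((hessMat Φ (e.symm p))⁻¹ * hessMat u (e.symm p)).trace := by
    rw [trace_mul_comm, fderiv_comp p (hgradu.differentiable one_ne_zero _)
      (he'.differentiable one_ne_zero p)]
    simp only [ContinuousLinearMap.comp_apply, h.fderiv_symm_apply hV hW.continuous he he',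
      fderiv_gradVec_apply hu, mulVec_single_one]
    rfl
  have he_symm (p : Fin n → ℝ) : gradVec Φ (e.symm p) = p := by rw [← he, e.apply_symm_apply]
  simp only [hgrad, hdiv, Function.comp_apply] at hibp
  rw [← h.integral_comp_symm he, ← h.integral_comp_symm he]
  simp only [linearizedMA, he_symm, dotProduct_mulVec, ← mulVec_transpose, hinvT]
  rw [hibp, neg_neg]

end IsBrenierPotential

end LinearizedOperator

section Fatou

variable {Ω : Type*} {mΩ : MeasurableSpace Ω} {μ : Measure Ω} {F : ℕ → Ω → ℝ} {f : Ω → ℝ}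
  {a : ℕ → ℝ} {A : ℝ}

lemma integrable_and_integral_le_of_tendsto_of_nonneg (hF : ∀ k, Integrable (F k) μ)
    (hF0 : ∀ k x, 0 ≤ F k x) (hFa : ∀ k, ∫ x, F k x ∂μ ≤ a k)
    (hlim : ∀ x, Tendsto (fun k => F k x) atTop (𝓝 (f x))) (ha : Tendsto a atTop (𝓝 A)) :
    Integrable f μ ∧ ∫ x, f x ∂μ ≤ A := by
  have hf0 (x : Ω) : 0 ≤ f x := ge_of_tendsto' (hlim x) fun k => hF0 k x
  have hA : 0 ≤ A := ge_of_tendsto' ha fun k => (integral_nonneg (hF0 k)).trans (hFa k)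
  have hmeas : AEStronglyMeasurable f μ :=
    aestronglyMeasurable_of_tendsto_ae atTop (fun k => (hF k).aestronglyMeasurable)
      (.of_forall hlim)
  have hle : ∫⁻ x, ENNReal.ofReal (f x) ∂μ ≤ ENNReal.ofReal A := calc
    _ = ∫⁻ x, liminf (fun k => ENNReal.ofReal (F k x)) atTop ∂μ := by
      simp_rw [fun x => (ENNReal.tendsto_ofReal (hlim x)).liminf_eq]
    _ ≤ liminf (fun k => ∫⁻ x, ENNReal.ofReal (F k x) ∂μ) atTop :=
      lintegral_liminf_le' fun k => (hF k).aemeasurable.ennreal_ofReal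
    _ ≤ liminf (fun k => ENNReal.ofReal (a k)) atTop := by
      refine liminf_le_liminf (.of_forall fun k => ?_)
      rw [← ofReal_integral_eq_lintegral_ofReal (hF k) (.of_forall (hF0 k))]
      exact ENNReal.ofReal_le_ofReal (hFa k)
    _ = ENNReal.ofReal A := (ENNReal.tendsto_ofReal ha).liminf_eq
  refine ⟨(lintegral_ofReal_ne_top_iff_integrable hmeas (.of_forall hf0)).1
    (hle.trans_lt ENNReal.ofReal_lt_top).ne, ?_⟩
  rw [integral_eq_lintegral_of_nonneg_ae (.of_forall hf0) hmeas]
  exact ENNReal.toReal_le_of_le_ofReal hA hle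

lemma integrable_and_integral_le_of_tendsto [IsFiniteMeasure μ] {b : ℝ}
    (hF : ∀ k, Integrable (F k) μ) (hFb : ∀ k x, -b ≤ F k x) (hFa : ∀ k, ∫ x, F k x ∂μ ≤ a k)
    (hlim : ∀ x, Tendsto (fun k => F k x) atTop (𝓝 (f x))) (ha : Tendsto a atTop (𝓝 A)) :
    Integrable f μ ∧ ∫ x, f x ∂μ ≤ A := by
  have hb : Integrable (fun _ => b) μ := integrable_const b
  obtain ⟨hfb, hle⟩ := integrable_and_integral_le_of_tendsto_of_nonneg
    (F := fun k x => F k x + b) (f := fun x => f x + b) (a := fun k => a k + ∫ _, b ∂μ)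
    (fun k => (hF k).add hb) (fun k x => by linarith [hFb k x])
    (fun k => by rw [integral_add (hF k) hb]; linarith [hFa k])
    (fun x => (hlim x).add_const b) (ha.add_const _)
  have hf : Integrable f μ := (integrable_add_const_iff).1 hfb
  rw [integral_add hf hb] at hle
  exact ⟨hf, by linarith⟩

end Fatou

section MaximumPrinciple

variable {n : ℕ} {V W Φ u : (Fin n → ℝ) → ℝ}

lemma exists_cutoff_seq (E : Type*) [NormedAddCommGroup E] [NormedSpace ℝ E]
    [FiniteDimensional ℝ E] :
    ∃ (η : ℕ → E → ℝ) (ε : ℕ → ℝ), (∀ k, ContDiff ℝ 1 (η k)) ∧ (∀ k, HasCompactSupport (η k)) ∧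
      (∀ k p, η k p ∈ Icc 0 1) ∧ (∀ p, Tendsto (fun k => η k p) atTop (𝓝 1)) ∧
      Tendsto ε atTop (𝓝 0) ∧ ∀ k p, ‖fderiv ℝ (η k) p‖ ≤ ε k := by
  let χ : ContDiffBump (0 : E) := ⟨1, 2, one_pos, one_lt_two⟩
  have hχ : ContDiff ℝ 1 χ := χ.contDiff
  obtain ⟨M, hM⟩ := (hχ.continuous_fderiv one_ne_zero).bounded_above_of_compact_support
    (χ.hasCompactSupport.fderiv ℝ)
  let c : ℕ → ℝ := fun k => 1 / (k + 1)
  have hc0 (k : ℕ) : 0 < c k := Nat.one_div_pos_of_nat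
  have hc : Tendsto c atTop (𝓝 0) := tendsto_one_div_add_atTop_nhds_zero_nat
  refine ⟨fun k p => χ (c k • p), fun k => c k * M, fun k => hχ.comp (contDiff_const_smul _),
    fun k => χ.hasCompactSupport.comp_smul (hc0 k).ne', fun k p => ⟨χ.nonneg, χ.le_one⟩,
    fun p => ?_, by simpa using hc.mul_const M, fun k p => ?_⟩
  · have hlim : Tendsto (fun k => c k • p) atTop (𝓝 0) := by simpa using hc.smul_const p
    simpa [χ.one_of_mem_closedBall (Metric.mem_closedBall_self χ.rIn_pos.le)] using!
      (χ.continuous.tendsto 0).comp hlim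
  · rw [fderiv_comp_smul, norm_smul, Real.norm_of_nonneg (hc0 k).le]
    exact mul_le_mul_of_nonneg_left (hM _) (hc0 k).le

lemma neg_abs_le_mul {t b a : ℝ} (ht : t ∈ Icc (0 : ℝ) 1) (ha : -b ≤ a) : -|b| ≤ t * a :=
  calc -|b| ≤ t * -|b| := by nlinarith [ht.2, abs_nonneg b]
    _ ≤ t * a := mul_le_mul_of_nonneg_left ((neg_le_neg (le_abs_self b)).trans ha) ht.1

namespace IsBrenierPotential

lemma hasCompactSupport_comp_gradVec (h : IsBrenierPotential V W Φ) (hV : Continuous V)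
    (hW : Continuous W) {β : Type*} [Zero β] {η : (Fin n → ℝ) → β} (hη : HasCompactSupport η) :
    HasCompactSupport fun x => η (gradVec Φ x) := by
  obtain ⟨e, he, -⟩ := h.exists_homeomorph hV hW
  simpa only [← he] using! hη.comp_homeomorph e

lemma integral_cutoff_mul_linearizedMA_le (h : IsBrenierPotential V W Φ) (hV : Continuous V)
    (hW : ContDiff ℝ 1 W) [IsFiniteMeasure (gibbs V)] {η : (Fin n → ℝ) → ℝ} {γ : ℝ → ℝ}
    (hη : ContDiff ℝ 1 η) (hηs : HasCompactSupport η) (hη0 : ∀ p, 0 ≤ η p)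
    (hγ : ContDiff ℝ 1 γ) (hγm : Monotone γ) (hu : ContDiff ℝ 2 u) :
    ∫ x, η (gradVec Φ x) * γ (u x) * linearizedMA W Φ u x ∂gibbs V ≤
      -∫ x, γ (u x) * (gradVec η (gradVec Φ x) ⬝ᵥ gradVec u x) ∂gibbs V := by
  have hu' : ContDiff ℝ 1 u := hu.of_le one_le_two
  have hηΦ : ContDiff ℝ 1 fun x => η (gradVec Φ x) := hη.comp h.contDiff_gradVec
  have hγu : ContDiff ℝ 1 fun x => γ (u x) := hγ.comp hu'
  have hsupp := h.hasCompactSupport_comp_gradVec hV hW.continuous hηs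
  have hgrad (x : Fin n → ℝ) : gradVec (fun x => η (gradVec Φ x) * γ (u x)) x =
      (η (gradVec Φ x) * deriv γ (u x)) • gradVec u x +
        γ (u x) • (hessMat Φ x *ᵥ gradVec η (gradVec Φ x)) := by
    rw [gradVec_mul (hηΦ.differentiable one_ne_zero x) (hγu.differentiable one_ne_zero x),
      gradVec_comp (hγ.differentiable one_ne_zero _) (hu'.differentiable one_ne_zero x),
      gradVec_comp_gradVec (hη.differentiable one_ne_zero _) h.contDiff, smul_smul]
  have hle (x : Fin n → ℝ) : γ (u x) * (gradVec η (gradVec Φ x) ⬝ᵥ gradVec u x) ≤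
      gradVec (fun x => η (gradVec Φ x) * γ (u x)) x ⬝ᵥ
        ((hessMat Φ x)⁻¹ *ᵥ gradVec u x) := by
    have hpos := h.posDef_hessMat hV hW.continuous x
    have hquad : 0 ≤ gradVec u x ⬝ᵥ ((hessMat Φ x)⁻¹ *ᵥ gradVec u x) :=
      hpos.inv.posSemidef.dotProduct_mulVec_nonneg _
    have hcancel : (hessMat Φ x *ᵥ gradVec η (gradVec Φ x)) ⬝ᵥ
        ((hessMat Φ x)⁻¹ *ᵥ gradVec u x) = gradVec η (gradVec Φ x) ⬝ᵥ gradVec u x := by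
      rw [← vecMul_transpose, hessMat_transpose h.contDiff, ← dotProduct_mulVec, mulVec_mulVec,
        mul_nonsing_inv _ hpos.det_pos.ne'.isUnit, one_mulVec]
    rw [hgrad, add_dotProduct, smul_dotProduct, smul_dotProduct, hcancel]
    exact le_add_of_nonneg_left (mul_nonneg (mul_nonneg (hη0 _) hγm.deriv_nonneg) hquad)
  have hgradu := (contDiff_gradVec (m := 1) hu).continuous
  have hinv := continuous_nonsing_inv (continuous_hessMat h.contDiff) fun x =>
    (h.posDef_hessMat hV hW.continuous x).det_pos.ne'
  rw [h.integral_mul_linearizedMA hV hW (hηΦ.mul hγu) hsupp.mul_right hu, neg_le_neg_iff]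
  refine integral_mono ?_ ?_ hle
  · exact (hγu.continuous.mul (((continuous_gradVec hη).comp h.continuous_gradVec).dotProduct
      hgradu)).integrable_of_hasCompactSupport (hasCompactSupport_dotProduct
      (h.hasCompactSupport_comp_gradVec hV hW.continuous (hasCompactSupport_gradVec hηs))).mul_left
  · exact ((continuous_gradVec (hηΦ.mul hγu)).dotProduct
      (hinv.matrix_mulVec hgradu)).integrable_of_hasCompactSupport
      (hasCompactSupport_dotProduct (hasCompactSupport_gradVec hsupp.mul_right))

/-- Integrated maximum principle: the cutoff `γ(u)` can be tested against the symmetric operator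
`linearizedMA W Φ` although neither `u` nor its derivatives decay. -/
lemma integral_comp_mul_linearizedMA_nonpos (h : IsBrenierPotential V W Φ) (hV : Continuous V)
    (hW : ContDiff ℝ 1 W) [IsFiniteMeasure (gibbs V)] {γ : ℝ → ℝ} (hγ : ContDiff ℝ 1 γ)
    (hγm : Monotone γ) (hγ01 : ∀ t, γ t ∈ Icc 0 1) (hu : ContDiff ℝ 2 u)
    (hgrad : Integrable (gradVec u) (gibbs V)) {b : ℝ} (hb : ∀ x, -b ≤ linearizedMA W Φ u x) :
    Integrable (fun x => γ (u x) * linearizedMA W Φ u x) (gibbs V) ∧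
      ∫ x, γ (u x) * linearizedMA W Φ u x ∂gibbs V ≤ 0 := by
  obtain ⟨η, ε, hη, hηs, hη01, hη1, hε, hηε⟩ := exists_cutoff_seq (Fin n → ℝ)
  have hlin := h.continuous_linearizedMA hV hW hu
  have hflux (k : ℕ) : -∫ x, γ (u x) * (gradVec (η k) (gradVec Φ x) ⬝ᵥ gradVec u x) ∂gibbs V ≤
      ε k * ∫ x, ‖gradVec u x‖ ∂gibbs V := by
    have hle (x : Fin n → ℝ) : ‖γ (u x) * (gradVec (η k) (gradVec Φ x) ⬝ᵥ gradVec u x)‖ ≤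
        ε k * ‖gradVec u x‖ := by
      rw [← fderiv_apply_eq_gradVec_dotProduct, norm_mul, Real.norm_of_nonneg (hγ01 _).1]
      exact (mul_le_of_le_one_left (norm_nonneg _) (hγ01 _).2).trans
        ((fderiv ℝ (η k) _).le_of_opNorm_le (hηε k _) _)
    rw [← integral_const_mul]
    exact (neg_le_abs _).trans
      (norm_integral_le_of_norm_le (hgrad.norm.const_mul (ε k)) (.of_forall hle))
  refine integrable_and_integral_le_of_tendsto (b := |b|)
    (F := fun k x => η k (gradVec Φ x) * γ (u x) * linearizedMA W Φ u x)
    (a := fun k => ε k * ∫ x, ‖gradVec u x‖ ∂gibbs V) (fun k => ?_) (fun k x => ?_)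
    (fun k => ?_) (fun x => ?_) (by simpa using hε.mul_const _)
  · refine (Continuous.integrable_of_hasCompactSupport ?_
      (h.hasCompactSupport_comp_gradVec hV hW.continuous (hηs k)).mul_right.mul_right)
    exact (((hη k).continuous.comp h.continuous_gradVec).mul
      (hγ.continuous.comp hu.continuous)).mul hlin
  · have hc0 := mul_nonneg (hη01 k (gradVec Φ x)).1 (hγ01 (u x)).1
    have hc1 := mul_le_one₀ (hη01 k (gradVec Φ x)).2 (hγ01 (u x)).1 (hγ01 (u x)).2
    exact neg_abs_le_mul ⟨hc0, hc1⟩ (hb x)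
  · exact (h.integral_cutoff_mul_linearizedMA_le hV hW (hη k) (hηs k) (fun p => (hη01 k p).1) hγ
      hγm hu).trans (hflux k)
  · simpa using (((hη1 (gradVec Φ x)).mul_const (γ (u x))).mul_const (linearizedMA W Φ u x))

end IsBrenierPotential

end MaximumPrinciple

section CompactlySupportedMeasure

variable {Y G : Type*} [TopologicalSpace Y] [MeasurableSpace Y] [NormedAddCommGroup G]
  {μ : Measure Y}

/-- The measure `μ` is concentrated on a compact set. -/
def IsCompactlySupported (μ : Measure Y) : Prop := ∃ K, IsCompact K ∧ ∀ᵐ y ∂μ, y ∈ K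

namespace IsCompactlySupported

variable [OpensMeasurableSpace Y]

lemma integrable [T2Space Y] [IsFiniteMeasure μ] (hμ : IsCompactlySupported μ) {f : Y → G}
    (hf : Continuous f) : Integrable f μ := by
  obtain ⟨K, hK, hμK⟩ := hμ
  rw [← Measure.restrict_eq_self_of_ae_mem hμK]
  exact hf.continuousOn.integrableOn_compact hK

lemma continuous_integral [IsFiniteMeasure μ] [SecondCountableTopologyEither Y G]
    [NormedSpace ℝ G] {X : Type*} [TopologicalSpace X] [FirstCountableTopology X]
    [LocallyCompactSpace X] (hμ : IsCompactlySupported μ) {f : X → Y → G}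
    (hf : Continuous f.uncurry) : Continuous fun x => ∫ y, f x y ∂μ := by
  obtain ⟨K, hK, hμK⟩ := hμ
  rw [← Measure.restrict_eq_self_of_ae_mem hμK]
  exact continuous_parametric_integral_of_continuous hf hK

lemma hasFDerivAt_integral [T2Space Y] [IsFiniteMeasure μ] [NormedSpace ℝ G] {X : Type*}
    [NormedAddCommGroup X] [NormedSpace ℝ X] [ProperSpace X]
    (hμ : IsCompactlySupported μ) {F : X → Y → G} {F' : X → Y → X →L[ℝ] G}
    (hF : ∀ x, Continuous (F x)) (hF' : Continuous F'.uncurry)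
    (hd : ∀ x y, HasFDerivAt (fun x => F x y) (F' x y) x) (x : X) :
    HasFDerivAt (fun x => ∫ y, F x y ∂μ) (∫ y, F' x y ∂μ) x := by
  obtain ⟨K, hK, hμK⟩ := id hμ
  obtain ⟨C, hC⟩ :=
    ((isCompact_closedBall x 1).prod hK).exists_bound_of_continuousOn hF'.continuousOn
  refine hasFDerivAt_integral_of_dominated_of_fderiv_le (bound := fun _ => C)
    (Metric.closedBall_mem_nhds x one_pos)
    (.of_forall fun z => (hμ.integrable (hF z)).aestronglyMeasurable) (hμ.integrable (hF x))
    (hμ.integrable (f := F' x) (by fun_prop)).aestronglyMeasurable ?_ (integrable_const C)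
    (.of_forall fun y z _ => hd z y)
  filter_upwards [hμK] with y hy z hz
  exact hC (z, y) ⟨hz, hy⟩

lemma hasDerivAt_integral [T2Space Y] [IsFiniteMeasure μ]
    (hμ : IsCompactlySupported μ) {F F' : ℝ → Y → ℝ} (hF : ∀ t, Continuous (F t))
    (hF' : Continuous F'.uncurry) (hd : ∀ t y, HasDerivAt (fun t => F t y) (F' t y) t) (t : ℝ) :
    HasDerivAt (fun t => ∫ y, F t y ∂μ) (∫ y, F' t y ∂μ) t := by
  have hspan : Continuous (Function.uncurry fun t y =>
      ContinuousLinearMap.toSpanSingleton ℝ (F' t y)) :=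
    (ContinuousLinearMap.toSpanSingletonCLE (𝕜 := ℝ) (E := ℝ)).continuous.comp hF'
  have h := (hμ.hasFDerivAt_integral hF hspan (fun t y => (hd t y).hasFDerivAt) t).hasDerivAt
  rw [ContinuousLinearMap.integral_apply (hμ.integrable (by exact hspan.uncurry_left t))] at h
  simpa using h

end IsCompactlySupported

end CompactlySupportedMeasure

section AffineAverage

variable {n : ℕ} {G : Type*} [NormedAddCommGroup G] {ρ : Measure (Fin n → ℝ)}
  {Λ : Matrix (Fin n) (Fin n) ℝ}

variable [IsFiniteMeasure ρ] in
lemma integrable_add_mulVec (hρ : IsCompactlySupported ρ) {f : (Fin n → ℝ) → G}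
    (hf : Continuous f) (x : Fin n → ℝ) : Integrable (fun y => f (x + Λ *ᵥ y)) ρ :=
  hρ.integrable (by fun_prop)

variable [NormedSpace ℝ G]

/-- The average of the translates `f (x + Λ y)` over `y` distributed according to `ρ`. -/
def affineAverage (ρ : Measure (Fin n → ℝ)) (Λ : Matrix (Fin n) (Fin n) ℝ) (f : (Fin n → ℝ) → G)
    (x : Fin n → ℝ) : G :=
  ∫ y, f (x + Λ *ᵥ y) ∂ρ

variable [IsFiniteMeasure ρ]

lemma continuous_affineAverage (hρ : IsCompactlySupported ρ) {f : (Fin n → ℝ) → G}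
    (hf : Continuous f) : Continuous (affineAverage ρ Λ f) :=
  hρ.continuous_integral (f := fun x y => f (x + Λ *ᵥ y)) (by fun_prop)

lemma hasFDerivAt_affineAverage (hρ : IsCompactlySupported ρ) {f : (Fin n → ℝ) → G}
    (hf : ContDiff ℝ 1 f) (x : Fin n → ℝ) :
    HasFDerivAt (affineAverage ρ Λ f) (affineAverage ρ Λ (fderiv ℝ f) x) x := by
  have := hf.continuous_fderiv one_ne_zero
  exact hρ.hasFDerivAt_integral (F := fun x y => f (x + Λ *ᵥ y))
    (F' := fun x y => fderiv ℝ f (x + Λ *ᵥ y)) (fun x => by have := hf.continuous; fun_prop)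
    (by fun_prop)
    (fun x y => hasFDerivAt_comp_add_right (Λ *ᵥ y) |>.2
      (hf.differentiable one_ne_zero _).hasFDerivAt) x

lemma contDiff_one_affineAverage (hρ : IsCompactlySupported ρ) {f : (Fin n → ℝ) → G}
    (hf : ContDiff ℝ 1 f) : ContDiff ℝ 1 (affineAverage ρ Λ f) :=
  contDiff_one_iff_hasFDerivAt.2 ⟨_,
    continuous_affineAverage hρ (hf.continuous_fderiv one_ne_zero),
    hasFDerivAt_affineAverage hρ hf⟩

lemma contDiff_two_affineAverage (hρ : IsCompactlySupported ρ) {f : (Fin n → ℝ) → G}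
    (hf : ContDiff ℝ 2 f) : ContDiff ℝ 2 (affineAverage ρ Λ f) := by
  have hf' : ContDiff ℝ 1 (fderiv ℝ f) := hf.fderiv_right (by norm_num)
  refine (contDiff_succ_iff_hasFDerivAt (n := 1)).2 ⟨_, contDiff_one_affineAverage hρ hf',
    hasFDerivAt_affineAverage hρ (hf.of_le one_le_two)⟩

variable {f : (Fin n → ℝ) → ℝ}

lemma gradVec_affineAverage_apply (hρ : IsCompactlySupported ρ) (hf : ContDiff ℝ 1 f)
    (x : Fin n → ℝ) (i : Fin n) :
    gradVec (affineAverage ρ Λ f) x i = affineAverage ρ Λ (fun z => gradVec f z i) x := by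
  rw [gradVec, (hasFDerivAt_affineAverage hρ hf x).fderiv]
  exact ContinuousLinearMap.integral_apply
    (integrable_add_mulVec hρ (hf.continuous_fderiv one_ne_zero) x) _

lemma hessMat_affineAverage_apply (hρ : IsCompactlySupported ρ) (hf : ContDiff ℝ 2 f)
    (x : Fin n → ℝ) (i j : Fin n) :
    hessMat (affineAverage ρ Λ f) x i j = affineAverage ρ Λ (fun z => hessMat f z i j) x := by
  have hgrad : (fun x => gradVec (affineAverage ρ Λ f) x j) =
      affineAverage ρ Λ fun z => gradVec f z j :=
    funext fun x => gradVec_affineAverage_apply hρ (hf.of_le one_le_two) x j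
  change gradVec (fun x => gradVec (affineAverage ρ Λ f) x j) x i = _
  rw [hgrad, gradVec_affineAverage_apply hρ (contDiff_pi.1 (contDiff_gradVec (m := 1) hf) j)]
  rfl

lemma dotProduct_gradVec_affineAverage (hρ : IsCompactlySupported ρ) (hf : ContDiff ℝ 1 f)
    (p x : Fin n → ℝ) : p ⬝ᵥ gradVec (affineAverage ρ Λ f) x =
      affineAverage ρ Λ (fun z => p ⬝ᵥ gradVec f z) x := by
  have hgrad (i : Fin n) : Continuous fun z => p i * gradVec f z i :=
    ((continuous_apply i).comp (continuous_gradVec hf)).const_mul _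
  simp only [dotProduct, gradVec_affineAverage_apply hρ hf, affineAverage, ← integral_const_mul]
  exact (integral_finsetSum _ fun i _ => integrable_add_mulVec hρ (hgrad i) x).symm

lemma trace_mul_hessMat_affineAverage (hρ : IsCompactlySupported ρ) (hf : ContDiff ℝ 2 f)
    (B : Matrix (Fin n) (Fin n) ℝ) (x : Fin n → ℝ) :
    (B * hessMat (affineAverage ρ Λ f) x).trace =
      affineAverage ρ Λ (fun z => (B * hessMat f z).trace) x := by
  have hhess (i j : Fin n) : Continuous fun z => B i j * hessMat f z j i :=
    ((continuous_hessMat hf).matrix_elem j i).const_mul _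
  simp only [trace, diag, mul_apply, hessMat_affineAverage_apply hρ hf, affineAverage,
    ← integral_const_mul]
  rw [integral_finsetSum _ fun i _ => integrable_finsetSum _ fun j _ =>
    integrable_add_mulVec hρ (hhess i j) x]
  exact Finset.sum_congr rfl fun i _ =>
    (integral_finsetSum _ fun j _ => integrable_add_mulVec hρ (hhess i j) x).symm

end AffineAverage

section SteinPair

variable {n : ℕ}

/-- The finite measure of density `r` with respect to Lebesgue measure, normalised to have total
mass one. -/
def normalizedDensity (r : (Fin n → ℝ) → ℝ) : Measure (Fin n → ℝ) :=
  volume.withDensity fun y => ENNReal.ofReal (r y / ∫ z, r z)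

section NormalizedDensity

variable {r : (Fin n → ℝ) → ℝ}

lemma isProbabilityMeasure_normalizedDensity (hr : Integrable r) (hr₀ : 0 ≤ r)
    (hpos : 0 < ∫ y, r y) : IsProbabilityMeasure (normalizedDensity r) := by
  refine ⟨?_⟩
  rw [normalizedDensity, withDensity_apply _ .univ, Measure.restrict_univ,
    ← ofReal_integral_eq_lintegral_ofReal (hr.div_const _)
      (.of_forall fun y => div_nonneg (hr₀ y) hpos.le),
    integral_div, div_self hpos.ne', ENNReal.ofReal_one]

lemma isCompactlySupported_normalizedDensity (hr : Measurable r) (hrs : HasCompactSupport r) :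
    IsCompactlySupported (normalizedDensity r) := by
  refine ⟨tsupport r, hrs, (ae_withDensity_iff (by fun_prop)).2 (.of_forall fun y hy => ?_)⟩
  contrapose! hy
  simp [image_eq_zero_of_notMem_tsupport hy]

lemma integral_normalizedDensity (hr : Measurable r) (hr₀ : 0 ≤ r) (f : (Fin n → ℝ) → ℝ) :
    ∫ y, f y ∂normalizedDensity r = (∫ y, r y * f y) / ∫ y, r y := by
  have hnonneg (y : Fin n → ℝ) : 0 ≤ r y / ∫ z, r z := div_nonneg (hr₀ y) (integral_nonneg hr₀)
  rw [normalizedDensity, integral_withDensity_eq_integral_toReal_smul (by fun_prop)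
    (.of_forall fun y => ENNReal.ofReal_lt_top), ← integral_div]
  simp only [ENNReal.toReal_ofReal (hnonneg _), smul_eq_mul, div_mul_eq_mul_div]

end NormalizedDensity

/-- A pair of compactly supported probability measures linked, for a scale `κ > 0`, by the
integration by parts formula `∫ X ⬝ y dρ = κ ∫ div X dσ`. The centred Gaussian measure would be
paired with itself; compact support makes all averages of continuous functions finite. -/
structure IsSteinPair (ρ σ : Measure (Fin n → ℝ)) (κ : ℝ) : Prop where
  isProbabilityMeasure_left : IsProbabilityMeasure ρ
  isProbabilityMeasure_right : IsProbabilityMeasure σ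
  isCompactlySupported_left : IsCompactlySupported ρ
  isCompactlySupported_right : IsCompactlySupported σ
  scale_pos : 0 < κ
  integral_dotProduct : ∀ X : (Fin n → ℝ) → Fin n → ℝ, ContDiff ℝ 1 X →
    ∫ y, X y ⬝ᵥ y ∂ρ = κ * ∫ y, ∑ i, fderiv ℝ X y (Pi.single i 1) i ∂σ

lemma isSteinPair_normalizedDensity {r w : (Fin n → ℝ) → ℝ} (hr : Continuous r)
    (hrs : HasCompactSupport r) (hr₀ : 0 ≤ r) (hrpos : 0 < ∫ y, r y) (hw : ContDiff ℝ 1 w)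
    (hws : HasCompactSupport w) (hw₀ : 0 ≤ w) (hwpos : 0 < ∫ y, w y)
    (hgrad : ∀ y, gradVec w y = -r y • y) :
    IsSteinPair (normalizedDensity r) (normalizedDensity w) ((∫ y, w y) / ∫ y, r y) where
  isProbabilityMeasure_left := isProbabilityMeasure_normalizedDensity
    (hr.integrable_of_hasCompactSupport hrs) hr₀ hrpos
  isProbabilityMeasure_right := isProbabilityMeasure_normalizedDensity
    (hw.continuous.integrable_of_hasCompactSupport hws) hw₀ hwpos
  isCompactlySupported_left := isCompactlySupported_normalizedDensity hr.measurable hrs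
  isCompactlySupported_right := isCompactlySupported_normalizedDensity hw.continuous.measurable hws
  scale_pos := div_pos hwpos hrpos
  integral_dotProduct X hX := by
    have hibp : ∫ y, r y * (X y ⬝ᵥ y) = ∫ y, w y * ∑ i, fderiv ℝ X y (Pi.single i 1) i := by
      simpa [hgrad, integral_neg, dotProduct_comm] using integral_gradVec_dotProduct hw hws hX
    rw [integral_normalizedDensity hr.measurable hr₀,
      integral_normalizedDensity hw.continuous.measurable hw₀, hibp]
    field_simp

lemma hasDerivAt_sq_max_zero (t : ℝ) : HasDerivAt (fun s : ℝ => max 0 s ^ 2) (2 * max 0 t) t := by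
  refine hasDerivAt_of_hasDerivAt_of_ne' (x := 0) (f := fun s : ℝ => max 0 s ^ 2)
    (g := fun s => 2 * max 0 s) (fun s hs => ?_) (by fun_prop) (by fun_prop) t
  rcases hs.lt_or_gt with hs | hs
  · rw [max_eq_left hs.le, mul_zero]
    refine (hasDerivAt_const s (0 : ℝ)).congr_of_eventuallyEq ?_
    filter_upwards [gt_mem_nhds hs] with t ht
    simp [max_eq_left ht.le]
  · rw [max_eq_right hs.le]
    refine (hasDerivAt_pow 2 s).congr_of_eventuallyEq ?_ |>.congr_deriv (by simp)
    filter_upwards [lt_mem_nhds hs] with t ht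
    rw [max_eq_right ht.le]

lemma contDiff_sq_max_zero : ContDiff ℝ 1 fun s : ℝ => max 0 s ^ 2 := by
  refine contDiff_one_iff_deriv.2 ⟨fun t => (hasDerivAt_sq_max_zero t).differentiableAt, ?_⟩
  rw [funext fun t => (hasDerivAt_sq_max_zero t).deriv]
  fun_prop

lemma gradVec_one_sub_dotProduct_self (y : Fin n → ℝ) :
    gradVec (fun z => 1 - z ⬝ᵥ z) y = -(2 : ℝ) • y := by
  have hd := HasFDerivAt.fun_sum fun i (_ : i ∈ Finset.univ) =>
    (hasFDerivAt_apply (𝕜 := ℝ) i y).fun_mul (hasFDerivAt_apply i y)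
  ext i
  simp [gradVec, dotProduct, (hd.const_sub 1).fderiv, Pi.single_apply, Finset.sum_add_distrib,
    two_mul]

lemma sq_norm_le_dotProduct_self (y : Fin n → ℝ) : ‖y‖ ^ 2 ≤ y ⬝ᵥ y := by
  have hnonneg : 0 ≤ y ⬝ᵥ y := Finset.sum_nonneg fun i _ => mul_self_nonneg (y i)
  rw [← Real.le_sqrt (norm_nonneg y) hnonneg, pi_norm_le_iff_of_nonneg (Real.sqrt_nonneg _)]
  intro i
  rw [Real.norm_eq_abs, ← Real.sqrt_sq_eq_abs, sq]
  exact Real.sqrt_le_sqrt (Finset.single_le_sum (f := fun i => y i * y i)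
    (fun i _ => mul_self_nonneg _) (Finset.mem_univ i))

lemma exists_isSteinPair (n : ℕ) :
    ∃ (ρ σ : Measure (Fin n → ℝ)) (κ : ℝ), IsSteinPair ρ σ κ := by
  set b : (Fin n → ℝ) → ℝ := fun y => max 0 (1 - y ⬝ᵥ y) with hb
  have hbc : Continuous b := by fun_prop
  have hb₀ : 0 ≤ b := fun y => le_max_left _ _
  have hbs : HasCompactSupport b := by
    refine .intro (isCompact_closedBall 0 1) fun y hy => max_eq_left ?_
    have hnorm : ‖y‖ ^ 2 ≤ y ⬝ᵥ y := sq_norm_le_dotProduct_self y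
    rw [mem_closedBall_zero_iff, not_le] at hy
    nlinarith
  have hpow : ContDiff ℝ 1 fun y : Fin n → ℝ => 1 - y ⬝ᵥ y := by
    simp only [dotProduct]
    fun_prop
  have hw : ContDiff ℝ 1 fun y => b y ^ 2 / 4 := (contDiff_sq_max_zero.comp hpow).div_const 4
  have hws : HasCompactSupport fun y => b y ^ 2 / 4 :=
    hbs.comp_left (g := fun t => t ^ 2 / 4) (by simp)
  have hw₀ : 0 ≤ fun y => b y ^ 2 / 4 := fun y => by positivity
  refine ⟨_, _, _, isSteinPair_normalizedDensity hbc hbs hb₀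
    (hbc.integral_pos_of_hasCompactSupport_nonneg_nonzero hbs hb₀ (x := 0) (by simp [hb]))
    hw hws hw₀
    (hw.continuous.integral_pos_of_hasCompactSupport_nonneg_nonzero hws hw₀ (x := 0)
      (by simp [hb])) fun y => ?_⟩
  have hγ := (hasDerivAt_sq_max_zero (1 - y ⬝ᵥ y)).div_const 4
  rw [gradVec_comp hγ.differentiableAt (hpow.differentiable one_ne_zero y), hγ.deriv,
    gradVec_one_sub_dotProduct_self]
  module

end SteinPair

section SteinDifference

variable {n : ℕ} {ρ σ : Measure (Fin n → ℝ)} {κ : ℝ} {L : Matrix (Fin n) (Fin n) ℝ}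
  {f : (Fin n → ℝ) → ℝ}

lemma continuous_trace_mul_hessMat (hf : ContDiff ℝ 2 f) (B : Matrix (Fin n) (Fin n) ℝ) :
    Continuous fun z => (B * hessMat f z).trace :=
  (continuous_const.matrix_mul (continuous_hessMat hf)).matrix_trace

lemma hasFDerivAt_mulVec (K : Matrix (Fin n) (Fin n) ℝ) (y : Fin n → ℝ) :
    HasFDerivAt (fun y => K *ᵥ y) K.mulVecLin.toContinuousLinearMap y :=
  K.mulVecLin.toContinuousLinearMap.hasFDerivAt

lemma contDiff_mulVec {m : WithTop ℕ∞} (K : Matrix (Fin n) (Fin n) ℝ) :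
    ContDiff ℝ m fun y : Fin n → ℝ => K *ᵥ y :=
  K.mulVecLin.toContinuousLinearMap.contDiff

lemma fderiv_mulVec_gradVec_add_mulVec (hf : ContDiff ℝ 2 f) (K Λ : Matrix (Fin n) (Fin n) ℝ)
    (x y v : Fin n → ℝ) : fderiv ℝ (fun y => K *ᵥ gradVec f (x + Λ *ᵥ y)) y v =
      (K * hessMat f (x + Λ *ᵥ y) * Λ) *ᵥ v := by
  have hgrad := (contDiff_gradVec (m := 1) hf).differentiable one_ne_zero (x + Λ *ᵥ y)
  have hd := (hasFDerivAt_mulVec K _).comp y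
    (hgrad.hasFDerivAt.comp (g := gradVec f) y ((hasFDerivAt_mulVec Λ y).const_add x))
  exact (DFunLike.congr_fun hd.fderiv v).trans (by simp [fderiv_gradVec_apply hf, Matrix.mul_assoc])

lemma tendsto_affineAverage_smul [IsProbabilityMeasure ρ] (hρ : IsCompactlySupported ρ)
    (hf : Continuous f) (x : Fin n → ℝ) :
    Tendsto (fun s : ℝ => affineAverage ρ (s • L) f x) (𝓝 0) (𝓝 (f x)) := by
  have hcont : Continuous fun s : ℝ => affineAverage ρ (s • L) f x :=
    hρ.continuous_integral (f := fun s y => f (x + (s • L) *ᵥ y)) (by fun_prop)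
  simpa [affineAverage] using hcont.tendsto 0

/-- The second difference `2 (∫ f (x + s L y) dρ(y) - f x) / (κ s²)`, which for a Stein pair of
scale `κ` approximates `Tr(L Lᵀ ∇²f)` at `x`. -/
def steinDifference (ρ : Measure (Fin n → ℝ)) (κ : ℝ) (L : Matrix (Fin n) (Fin n) ℝ) (s : ℝ)
    (f : (Fin n → ℝ) → ℝ) (x : Fin n → ℝ) : ℝ :=
  2 / (κ * s ^ 2) * (affineAverage ρ (s • L) f x - f x)

namespace IsSteinPair

lemma integral_dotProduct_eq_zero (h : IsSteinPair ρ σ κ) (v : Fin n → ℝ) :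
    ∫ y, v ⬝ᵥ y ∂ρ = 0 := by
  simpa using h.integral_dotProduct (fun _ => v) contDiff_const

lemma integral_mulVec_dotProduct (h : IsSteinPair ρ σ κ) (K : Matrix (Fin n) (Fin n) ℝ) :
    ∫ y, K *ᵥ y ⬝ᵥ y ∂ρ = κ * K.trace := by
  have := h.isProbabilityMeasure_right
  simpa [(hasFDerivAt_mulVec K _).fderiv, trace] using
    h.integral_dotProduct (fun y => K *ᵥ y) (contDiff_mulVec K)

lemma integral_gradVec_dotProduct_mulVec (h : IsSteinPair ρ σ κ) (hf : ContDiff ℝ 2 f)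
    (x : Fin n → ℝ) (s : ℝ) :
    ∫ y, gradVec f (x + (s • L) *ᵥ y) ⬝ᵥ L *ᵥ y ∂ρ =
      κ * s * affineAverage σ (s • L) (fun z => (L * Lᵀ * hessMat f z).trace) x := by
  have hX : ContDiff ℝ 1 fun y => Lᵀ *ᵥ gradVec f (x + (s • L) *ᵥ y) :=
    (contDiff_mulVec Lᵀ).comp ((contDiff_gradVec (m := 1) hf).comp
      (contDiff_const.add (contDiff_mulVec (s • L))))
  have htrace (H : Matrix (Fin n) (Fin n) ℝ) :
      ∑ i, ((Lᵀ * H * (s • L)) *ᵥ Pi.single i 1) i = s * (L * Lᵀ * H).trace := by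
    rw [Matrix.mul_assoc L, trace_mul_comm L]
    simp [trace, Finset.mul_sum]
  calc ∫ y, gradVec f (x + (s • L) *ᵥ y) ⬝ᵥ L *ᵥ y ∂ρ
      = ∫ y, (Lᵀ *ᵥ gradVec f (x + (s • L) *ᵥ y)) ⬝ᵥ y ∂ρ := by
        simp only [dotProduct_mulVec, mulVec_transpose]
    _ = κ * ∫ y, s * (L * Lᵀ * hessMat f (x + (s • L) *ᵥ y)).trace ∂σ := by
        rw [h.integral_dotProduct _ hX]
        simp only [fderiv_mulVec_gradVec_add_mulVec hf, htrace]
    _ = _ := by rw [integral_const_mul, mul_assoc, affineAverage]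

lemma hasDerivAt_affineAverage_smul (h : IsSteinPair ρ σ κ) (hf : ContDiff ℝ 2 f)
    (x : Fin n → ℝ) (s : ℝ) : HasDerivAt (fun s : ℝ => affineAverage ρ (s • L) f x)
      (κ * s * affineAverage σ (s • L) (fun z => (L * Lᵀ * hessMat f z).trace) x) s := by
  have := h.isProbabilityMeasure_left
  have hgrad : Continuous (gradVec f) := continuous_gradVec (hf.of_le one_le_two)
  rw [← h.integral_gradVec_dotProduct_mulVec hf]
  refine h.isCompactlySupported_left.hasDerivAt_integral
    (F := fun s y => f (x + (s • L) *ᵥ y))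
    (F' := fun s y => gradVec f (x + (s • L) *ᵥ y) ⬝ᵥ L *ᵥ y)
    (fun s => hf.continuous.comp (by fun_prop)) ?_ (fun s y => ?_) s
  · fun_prop
  · simpa only [smul_mulVec] using hasDerivAt_line (hf.differentiable two_ne_zero) x (L *ᵥ y) s

lemma exists_steinDifference_eq (h : IsSteinPair ρ σ κ) (hf : ContDiff ℝ 2 f) (x : Fin n → ℝ)
    {s : ℝ} (hs : 0 < s) : ∃ r ∈ Ioo 0 s, steinDifference ρ κ L s f x =
      affineAverage σ (r • L) (fun z => (L * Lᵀ * hessMat f z).trace) x := by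
  have := h.isProbabilityMeasure_left
  have hκ := h.scale_pos
  have hd := fun r => h.hasDerivAt_affineAverage_smul (L := L) hf x r
  obtain ⟨r, hr, hslope⟩ := exists_ratio_hasDerivAt_eq_ratio_slope _ _ hs
    (fun r _ => (hd r).continuousAt.continuousWithinAt) (fun r _ => hd r) (· ^ 2) (2 * ·)
    (by fun_prop) (fun r _ => by simpa using hasDerivAt_pow 2 r)
  refine ⟨r, hr, ?_⟩
  have hr₀ := hr.1
  have hzero : affineAverage ρ ((0 : ℝ) • L) f x = f x := by simp [affineAverage]
  rw [hzero] at hslope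
  rw [steinDifference]
  field_simp
  refine mul_left_cancel₀ hr₀.ne' ?_
  linear_combination -hslope

lemma steinDifference_le (h : IsSteinPair ρ σ κ) (hf : ContDiff ℝ 2 f) {α : ℝ}
    (hα : ∀ x, (L * Lᵀ * hessMat f x).trace ≤ α) {s : ℝ} (hs : 0 < s) (x : Fin n → ℝ) :
    steinDifference ρ κ L s f x ≤ α := by
  have := h.isProbabilityMeasure_right
  obtain ⟨r, -, hr⟩ := h.exists_steinDifference_eq (L := L) hf x hs
  have hcont : Continuous fun z => (L * Lᵀ * hessMat f z).trace :=
    continuous_trace_mul_hessMat hf _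
  rw [hr]
  calc affineAverage σ (r • L) (fun z => (L * Lᵀ * hessMat f z).trace) x
      ≤ affineAverage σ (r • L) (fun _ => α) x :=
        integral_mono (integrable_add_mulVec h.isCompactlySupported_right hcont x)
          (integrable_const α) fun y => hα _
    _ = α := by simp [affineAverage]

lemma tendsto_steinDifference (h : IsSteinPair ρ σ κ) (hf : ContDiff ℝ 2 f) (x : Fin n → ℝ) :
    Tendsto (fun s => steinDifference ρ κ L s f x) (𝓝[>] 0)
      (𝓝 (L * Lᵀ * hessMat f x).trace) := by
  have := h.isProbabilityMeasure_right
  have hcont : Continuous fun z => (L * Lᵀ * hessMat f z).trace :=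
    continuous_trace_mul_hessMat hf _
  choose! r hr hdiff using fun s (hs : 0 < s) => h.exists_steinDifference_eq (L := L) hf x hs
  have hr₀ : Tendsto r (𝓝[>] 0) (𝓝 0) :=
    tendsto_of_tendsto_of_tendsto_of_le_of_le' tendsto_const_nhds
      (tendsto_id.mono_left nhdsWithin_le_nhds)
      (eventually_mem_nhdsWithin.mono fun s hs => (hr s hs).1.le)
      (eventually_mem_nhdsWithin.mono fun s hs => (hr s hs).2.le)
  refine ((tendsto_affineAverage_smul (L := L) h.isCompactlySupported_right hcont x).comp
    hr₀).congr' ?_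
  filter_upwards [self_mem_nhdsWithin] with s hs using (hdiff s hs).symm

end IsSteinPair

end SteinDifference

section MatrixInequalities

variable {n : ℕ} {G P Q : Matrix (Fin n) (Fin n) ℝ}

open scoped MatrixOrder in
lemma exists_eq_mul_transpose (hP : P.PosSemidef) :
    ∃ L : Matrix (Fin n) (Fin n) ℝ, P = L * Lᵀ := by
  obtain ⟨C, hC⟩ := CStarAlgebra.nonneg_iff_eq_star_mul_self.1 hP.nonneg
  exact ⟨Cᵀ, by simpa [star_eq_conjTranspose] using hC⟩

lemma log_det_le_trace_sub (hP : P.PosDef) : Real.log P.det ≤ P.trace - n := by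
  have hlog : ∑ i, Real.log (hP.isHermitian.eigenvalues i) ≤
      ∑ i, (hP.isHermitian.eigenvalues i - 1) :=
    Finset.sum_le_sum fun i _ => Real.log_le_sub_one_of_pos (hP.eigenvalues_pos i)
  rw [← Real.log_prod fun i _ => (hP.eigenvalues_pos i).ne', Finset.sum_sub_distrib] at hlog
  rw [hP.isHermitian.det_eq_prod_eigenvalues, hP.isHermitian.trace_eq_sum_eigenvalues]
  simpa using hlog

-- Conjugating by a square root of `P⁻¹` reduces the tangent inequality to the one at the identity.
lemma log_det_sub_log_det_le (hP : P.PosDef) (hQ : Q.PosDef) :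
    Real.log Q.det - Real.log P.det ≤ (P⁻¹ * Q).trace - n := by
  obtain ⟨L, hL⟩ := exists_eq_mul_transpose hP.inv.posSemidef
  have hdet : (Lᵀ * Q * L).det = P.det⁻¹ * Q.det := by
    rw [det_mul, det_mul, mul_right_comm, ← det_mul, ← Ring.inverse_eq_inv', ← det_nonsing_inv,
      hL, det_mul, det_mul, mul_comm Lᵀ.det]
  have hpsd : (Lᵀ * Q * L).PosSemidef := by
    simpa using hQ.posSemidef.conjTranspose_mul_mul_same L
  have hdet₀ : (Lᵀ * Q * L).det ≠ 0 :=
    hdet ▸ (mul_pos (inv_pos.2 hP.det_pos) hQ.det_pos).ne'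
  have h := log_det_le_trace_sub (hpsd.posDef_iff_det_ne_zero.2 hdet₀)
  rw [hdet, Real.log_mul (inv_pos.2 hP.det_pos).ne' hQ.det_pos.ne', Real.log_inv,
    trace_mul_comm, ← Matrix.mul_assoc, ← hL] at h
  linarith

-- Expand the nonnegative quadratic form of `G⁻¹` at `a - G v`.
lemma two_mul_dotProduct_sub_le (hG : G.PosDef) (a v : Fin n → ℝ) :
    2 * (a ⬝ᵥ v) - v ⬝ᵥ G *ᵥ v ≤ a ⬝ᵥ G⁻¹ *ᵥ a := by
  have h : 0 ≤ (a - G *ᵥ v) ⬝ᵥ G⁻¹ *ᵥ (a - G *ᵥ v) :=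
    hG.inv.posSemidef.dotProduct_mulVec_nonneg (a - G *ᵥ v)
  have hinv : G⁻¹ *ᵥ G *ᵥ v = v := by
    rw [mulVec_mulVec, nonsing_inv_mul _ hG.det_pos.ne'.isUnit, one_mulVec]
  have hsymm : (G *ᵥ v) ⬝ᵥ G⁻¹ *ᵥ a = a ⬝ᵥ v := by
    have hGinv : (G⁻¹)ᵀ = G⁻¹ := hG.inv.isHermitian.eq
    rw [dotProduct_comm, ← vecMul_transpose, hGinv, ← dotProduct_mulVec, hinv]
  rw [mulVec_sub, hinv, sub_dotProduct, dotProduct_sub, dotProduct_sub, hsymm,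
    dotProduct_comm (G *ᵥ v)] at h
  linarith

end MatrixInequalities

section StrongConvexity

variable {n : ℕ} {W : (Fin n → ℝ) → ℝ} {G K : Matrix (Fin n) (Fin n) ℝ}

lemma add_gradVec_dotProduct_add_le (hW : ContDiff ℝ 2 W)
    (hK : ∀ x, (hessMat W x - K).PosSemidef) (p v : Fin n → ℝ) :
    W p + gradVec W p ⬝ᵥ v + v ⬝ᵥ K *ᵥ v / 2 ≤ W (p + v) := by
  set c := v ⬝ᵥ K *ᵥ v
  have hd (t : ℝ) : HasDerivAt (fun s : ℝ => W (p + s • v) - c / 2 * s ^ 2)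
      (gradVec W (p + t • v) ⬝ᵥ v - c * t) t := by
    refine ((hasDerivAt_line (hW.differentiable two_ne_zero) p v t).fun_sub
      ((hasDerivAt_pow 2 t).const_mul (c / 2))).congr_deriv ?_
    ring
  have hmono : Monotone fun t : ℝ => gradVec W (p + t • v) ⬝ᵥ v - c * t := by
    refine monotone_of_hasDerivAt_nonneg (fun t => (hasDerivAt_gradVec_line hW p v t).fun_sub
      ((hasDerivAt_id t).const_mul c)) fun t => ?_
    have hquad : 0 ≤ v ⬝ᵥ (hessMat W (p + t • v) - K) *ᵥ v :=
      (hK (p + t • v)).dotProduct_mulVec_nonneg v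
    simpa [sub_mulVec, dotProduct_sub] using hquad
  obtain ⟨t, ht, hslope⟩ := exists_hasDerivAt_eq_slope _ _ zero_lt_one
    (fun t _ => (hd t).continuousAt.continuousWithinAt) fun t _ => hd t
  have hle := hmono ht.1.le
  simp only [zero_smul, add_zero, mul_zero, sub_zero, hslope, one_smul, one_pow, mul_one, ne_eq,
    OfNat.ofNat_ne_zero, not_false_eq_true, zero_pow, div_one] at hle
  linarith

lemma conjugateDomain_eq_univ (hW : ContDiff ℝ 2 W) (hG : G.PosDef)
    (hK : ∀ x, (hessMat W x - G⁻¹).PosSemidef) : conjugateDomain W = univ := by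
  refine eq_univ_of_forall fun p => ?_
  set v := p - gradVec W 0 with hv
  refine ⟨v ⬝ᵥ G *ᵥ v / 2 - W 0, fun x => ?_⟩
  have hconvex := add_gradVec_dotProduct_add_le hW hK 0 x
  have hyoung := two_mul_dotProduct_sub_le hG x v
  rw [hv, dotProduct_sub, dotProduct_comm x, dotProduct_comm x, ← hv] at hyoung
  rw [zero_add] at hconvex
  linarith

end StrongConvexity

section LocalInequality

variable {n : ℕ} {V W Φ u : (Fin n → ℝ) → ℝ} {G L : Matrix (Fin n) (Fin n) ℝ}
  {ρ σ : Measure (Fin n → ℝ)} {κ : ℝ}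

lemma contDiff_steinDifference [IsFiniteMeasure ρ] (hρ : IsCompactlySupported ρ)
    (hu : ContDiff ℝ 2 u) (s : ℝ) : ContDiff ℝ 2 (steinDifference ρ κ L s u) :=
  contDiff_const.mul ((contDiff_two_affineAverage hρ hu).sub hu)

lemma gradVec_steinDifference [IsFiniteMeasure ρ] (hρ : IsCompactlySupported ρ)
    (hu : ContDiff ℝ 2 u) (s : ℝ) (x : Fin n → ℝ) : gradVec (steinDifference ρ κ L s u) x =
      (2 / (κ * s ^ 2)) • (gradVec (affineAverage ρ (s • L) u) x - gradVec u x) :=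
  gradVec_const_mul_sub _ ((contDiff_two_affineAverage hρ hu).differentiable two_ne_zero x)
    (hu.differentiable two_ne_zero x)

/-- The operator `linearizedMA W Φ` with its coefficients frozen at `x`; having constant
coefficients, it commutes with averages of translates. -/
def frozenLinearizedMA (W Φ : (Fin n → ℝ) → ℝ) (x : Fin n → ℝ) (u : (Fin n → ℝ) → ℝ)
    (z : Fin n → ℝ) : ℝ :=
  ((hessMat Φ x)⁻¹ * hessMat u z).trace - gradVec W (gradVec Φ x) ⬝ᵥ gradVec u z

lemma continuous_frozenLinearizedMA (hu : ContDiff ℝ 2 u) (x : Fin n → ℝ) :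
    Continuous (frozenLinearizedMA W Φ x u) :=
  (continuous_trace_mul_hessMat hu _).sub
    (continuous_const.dotProduct (continuous_gradVec (hu.of_le one_le_two)))

lemma linearizedMA_steinDifference [IsFiniteMeasure ρ] (hρ : IsCompactlySupported ρ)
    (hu : ContDiff ℝ 2 u) (s : ℝ) (x : Fin n → ℝ) :
    linearizedMA W Φ (steinDifference ρ κ L s u) x =
      steinDifference ρ κ L s (frozenLinearizedMA W Φ x u) x := by
  have htrace := continuous_trace_mul_hessMat hu (hessMat Φ x)⁻¹
  have hgrad : Continuous fun z => gradVec W (gradVec Φ x) ⬝ᵥ gradVec u z :=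
    continuous_const.dotProduct (continuous_gradVec (hu.of_le one_le_two))
  have haverage : affineAverage ρ (s • L) (frozenLinearizedMA W Φ x u) x =
      affineAverage ρ (s • L) (fun z => ((hessMat Φ x)⁻¹ * hessMat u z).trace) x -
        affineAverage ρ (s • L) (fun z => gradVec W (gradVec Φ x) ⬝ᵥ gradVec u z) x :=
    integral_sub (integrable_add_mulVec hρ htrace x) (integrable_add_mulVec hρ hgrad x)
  have hhess : hessMat (steinDifference ρ κ L s u) x =
      (2 / (κ * s ^ 2)) • (hessMat (affineAverage ρ (s • L) u) x - hessMat u x) :=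
    hessMat_const_mul_sub _ (contDiff_two_affineAverage hρ hu) hu x
  rw [linearizedMA, gradVec_steinDifference hρ hu, hhess, Matrix.mul_smul, trace_smul,
    Matrix.mul_sub, trace_sub, dotProduct_smul, dotProduct_sub,
    trace_mul_hessMat_affineAverage hρ hu,
    dotProduct_gradVec_affineAverage hρ (hu.of_le one_le_two), steinDifference, haverage,
    frozenLinearizedMA]
  simp only [smul_eq_mul]
  ring

-- The Monge-Ampère equation at `x` and at `z`, concavity of `log det` and the strong convexity of
-- `W` combine; `v` is a dual variable for the quadratic form of `G⁻¹`.
lemma IsBrenierPotential.dotProduct_sub_le_frozenLinearizedMA_sub (h : IsBrenierPotential V W Φ)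
    (hV : Continuous V) (hW : ContDiff ℝ 2 W) (hG : G.PosDef)
    (hK : ∀ x, (hessMat W x - G⁻¹).PosSemidef) (x z v : Fin n → ℝ) :
    (gradVec Φ z - gradVec Φ x) ⬝ᵥ v - v ⬝ᵥ G *ᵥ v / 2 - (V z - V x) ≤
      frozenLinearizedMA W Φ x Φ z - frozenLinearizedMA W Φ x Φ x := by
  have hpos := h.posDef_hessMat hV hW.continuous
  have hself : ((hessMat Φ x)⁻¹ * hessMat Φ x).trace = n := by
    rw [nonsing_inv_mul _ (hpos x).det_pos.ne'.isUnit, trace_one, Fintype.card_fin]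
  have hlogdet := log_det_sub_log_det_le (hpos x) (hpos z)
  rw [h.log_det_hessMat hV hW.continuous, h.log_det_hessMat hV hW.continuous] at hlogdet
  have hconvex := add_gradVec_dotProduct_add_le hW hK (gradVec Φ x) (gradVec Φ z - gradVec Φ x)
  have hyoung := two_mul_dotProduct_sub_le hG (gradVec Φ z - gradVec Φ x) v
  rw [add_sub_cancel, dotProduct_sub (gradVec W _)] at hconvex
  rw [frozenLinearizedMA, frozenLinearizedMA, hself]
  linarith

namespace IsSteinPair

lemma integral_mulVec_dotProduct_mulVec (h : IsSteinPair ρ σ κ) :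
    ∫ y, L *ᵥ y ⬝ᵥ G *ᵥ (L *ᵥ y) ∂ρ = κ * (L * Lᵀ * G).trace := by
  have htrace : (L * Lᵀ * G).trace = (Lᵀ * G * L).trace := by
    rw [Matrix.mul_assoc, trace_mul_comm]
  have hquad (y : Fin n → ℝ) : L *ᵥ y ⬝ᵥ G *ᵥ (L *ᵥ y) = (Lᵀ * G * L) *ᵥ y ⬝ᵥ y := by
    rw [dotProduct_comm, ← mulVec_mulVec, ← mulVec_mulVec, mulVec_transpose, dotProduct_mulVec]
  simp only [hquad, htrace, h.integral_mulVec_dotProduct]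

lemma integral_sub_gradVec_dotProduct_mulVec (h : IsSteinPair ρ σ κ) (hu : ContDiff ℝ 2 u)
    (x : Fin n → ℝ) (s : ℝ) :
    ∫ y, (gradVec u (x + (s • L) *ᵥ y) - gradVec u x) ⬝ᵥ L *ᵥ y ∂ρ =
      κ * s * affineAverage σ (s • L) (fun z => (L * Lᵀ * hessMat u z).trace) x := by
  have := h.isProbabilityMeasure_left
  have hgrad := continuous_gradVec (hu.of_le one_le_two)
  have hzero : ∫ y, gradVec u x ⬝ᵥ L *ᵥ y ∂ρ = 0 := by
    simpa only [dotProduct_mulVec] using h.integral_dotProduct_eq_zero (gradVec u x ᵥ* L)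
  simp only [sub_dotProduct]
  rw [integral_sub (h.isCompactlySupported_left.integrable (by fun_prop))
    (h.isCompactlySupported_left.integrable (by fun_prop)), hzero, sub_zero,
    h.integral_gradVec_dotProduct_mulVec hu]

lemma integral_sub_eq (h : IsSteinPair ρ σ κ) {f : (Fin n → ℝ) → ℝ} (hf : Continuous f)
    {s : ℝ} (hs : 0 < s) (x : Fin n → ℝ) :
    ∫ y, (f (x + (s • L) *ᵥ y) - f x) ∂ρ = κ * s ^ 2 / 2 * steinDifference ρ κ L s f x := by
  have := h.isProbabilityMeasure_left
  have hκ := h.scale_pos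
  rw [integral_sub (integrable_add_mulVec h.isCompactlySupported_left hf x)
    (integrable_const _), steinDifference, affineAverage]
  field_simp
  simp

lemma two_mul_affineAverage_sub_le_linearizedMA (hst : IsSteinPair ρ σ κ)
    (h : IsBrenierPotential V W Φ) (hV : Continuous V) (hW : ContDiff ℝ 2 W) (hG : G.PosDef)
    (hK : ∀ x, (hessMat W x - G⁻¹).PosSemidef) {s : ℝ} (hs : 0 < s) (x : Fin n → ℝ) (μ : ℝ) :
    2 * μ * affineAverage σ (s • L) (fun z => (L * Lᵀ * hessMat Φ z).trace) x -
        μ ^ 2 * (L * Lᵀ * G).trace - steinDifference ρ κ L s V x ≤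
      linearizedMA W Φ (steinDifference ρ κ L s Φ) x := by
  have := hst.isProbabilityMeasure_left
  have hρ := hst.isCompactlySupported_left
  have hκ := hst.scale_pos
  have hgrad := h.continuous_gradVec
  have hJ := continuous_frozenLinearizedMA (W := W) (Φ := Φ) h.contDiff x
  have hle := integral_mono
    (f := fun y => s * μ * ((gradVec Φ (x + (s • L) *ᵥ y) - gradVec Φ x) ⬝ᵥ L *ᵥ y) -
      (s * μ) ^ 2 / 2 * (L *ᵥ y ⬝ᵥ G *ᵥ (L *ᵥ y)) - (V (x + (s • L) *ᵥ y) - V x))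
    (g := fun y => frozenLinearizedMA W Φ x Φ (x + (s • L) *ᵥ y) - frozenLinearizedMA W Φ x Φ x)
    (hρ.integrable (by fun_prop)) (hρ.integrable (by fun_prop)) fun y => by
      have hincr := h.dotProduct_sub_le_frozenLinearizedMA_sub hV hW hG hK x (x + (s • L) *ᵥ y)
        ((s * μ) • L *ᵥ y)
      simp only [dotProduct_smul, smul_dotProduct, mulVec_smul, smul_eq_mul] at hincr
      exact le_trans (le_of_eq (by ring)) hincr
  rw [integral_sub (hρ.integrable (by fun_prop)) (hρ.integrable (by fun_prop)),
    integral_sub (hρ.integrable (by fun_prop)) (hρ.integrable (by fun_prop)),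
    integral_const_mul, integral_const_mul, hst.integral_sub_gradVec_dotProduct_mulVec h.contDiff,
    hst.integral_mulVec_dotProduct_mulVec, hst.integral_sub_eq hV hs, hst.integral_sub_eq hJ hs,
    ← linearizedMA_steinDifference hρ h.contDiff] at hle
  refine le_of_mul_le_mul_left ?_ (by positivity : 0 < κ * s ^ 2 / 2)
  linarith

lemma sq_affineAverage_div_sub_le_linearizedMA (hst : IsSteinPair ρ σ κ)
    (h : IsBrenierPotential V W Φ) (hV : ContDiff ℝ 2 V) (hW : ContDiff ℝ 2 W) (hG : G.PosDef)
    (hK : ∀ x, (hessMat W x - G⁻¹).PosSemidef) {α : ℝ} (hα : ∀ x, (L * Lᵀ * hessMat V x).trace ≤ α)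
    (hc : 0 < (L * Lᵀ * G).trace) {s : ℝ} (hs : 0 < s) (x : Fin n → ℝ) :
    affineAverage σ (s • L) (fun z => (L * Lᵀ * hessMat Φ z).trace) x ^ 2 /
        (L * Lᵀ * G).trace - α ≤ linearizedMA W Φ (steinDifference ρ κ L s Φ) x := by
  set q := affineAverage σ (s • L) (fun z => (L * Lᵀ * hessMat Φ z).trace) x
  set c := (L * Lᵀ * G).trace
  have hle := hst.two_mul_affineAverage_sub_le_linearizedMA (L := L) h hV.continuous hW hG hK hs x
    (q / c)
  have hVle := hst.steinDifference_le hV hα hs x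
  have hoptimal : 2 * (q / c) * q - (q / c) ^ 2 * c = q ^ 2 / c := by
    field_simp
    ring
  linarith

end IsSteinPair

end LocalInequality

section Integrability

variable {n : ℕ} {V W Φ u F : (Fin n → ℝ) → ℝ} {G L Λ : Matrix (Fin n) (Fin n) ℝ}
  {ρ σ : Measure (Fin n → ℝ)} {κ : ℝ}

lemma integrable_gibbs_iff (hV : Continuous V) {f : (Fin n → ℝ) → ℝ} :
    Integrable f (gibbs V) ↔ Integrable fun x => Real.exp (-V x) * f x := by
  rw [integrable_withDensity_iff_integrable_smul' (measurable_ofReal_exp_neg hV)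
    (.of_forall fun _ => ENNReal.ofReal_lt_top)]
  simp only [ENNReal.toReal_ofReal (Real.exp_pos _).le, smul_eq_mul]

-- `W` grows faster than `(n + 2) ‖p‖`, leaving a factor `exp (-(n + 1) ‖p‖)`, which is integrable.
lemma integrable_exp_norm_gibbs (hW : Continuous W) (hdom : conjugateDomain W = univ) :
    Integrable (fun p => Real.exp ‖p‖) (gibbs W) := by
  obtain ⟨C, hC⟩ := exists_mul_norm_sub_le hdom (r := n + 2) (by positivity)
  have hdecay : Integrable fun p : Fin n → ℝ => Real.exp C * (1 + ‖p‖) ^ (-(n + 1 : ℝ)) :=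
    (integrable_one_add_norm (by simp)).const_mul _
  refine (integrable_gibbs_iff hW).2 (hdecay.mono' (by fun_prop) (.of_forall fun p => ?_))
  have hpow : Real.exp (-(n + 1) * ‖p‖) ≤ (1 + ‖p‖) ^ (-(n + 1 : ℝ)) := by
    rw [mul_comm, Real.exp_mul]
    exact Real.rpow_le_rpow_of_nonpos (by positivity) (by linarith [Real.add_one_le_exp ‖p‖])
      (by linarith)
  calc ‖Real.exp (-W p) * Real.exp ‖p‖‖ = Real.exp (-W p + ‖p‖) := by
        rw [← Real.exp_add, Real.norm_of_nonneg (Real.exp_pos _).le]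
    _ ≤ Real.exp (C + -(n + 1) * ‖p‖) := Real.exp_le_exp.2 (by linarith [hC p])
    _ ≤ Real.exp C * (1 + ‖p‖) ^ (-(n + 1 : ℝ)) := by
        rw [Real.exp_add]
        gcongr

lemma IsBrenierPotential.integrable_exp_norm_gradVec (h : IsBrenierPotential V W Φ)
    (hW : Continuous W) (hdom : conjugateDomain W = univ) :
    Integrable (fun x => Real.exp ‖gradVec Φ x‖) (gibbs V) := by
  have hexp := integrable_exp_norm_gibbs hW hdom
  rw [← h.map_gradVec] at hexp
  exact hexp.comp_measurable h.continuous_gradVec.measurable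

lemma integrable_affineAverage [IsFiniteMeasure ρ] (hF : Continuous F) (hFi : Integrable F) :
    Integrable (affineAverage ρ Λ F) := by
  have hcont : Continuous fun z : (Fin n → ℝ) × (Fin n → ℝ) => F (z.1 + Λ *ᵥ z.2) := by fun_prop
  have hprod : Integrable (fun z : (Fin n → ℝ) × (Fin n → ℝ) => F (z.1 + Λ *ᵥ z.2))
      (volume.prod ρ) := by
    refine (integrable_prod_iff' hcont.aestronglyMeasurable).2
      ⟨.of_forall fun y => hFi.comp_add_right (Λ *ᵥ y), ?_⟩
    simp only [fun y => integral_add_right_eq_self (μ := volume) (fun x => ‖F x‖) (Λ *ᵥ y)]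
    exact integrable_const _
  exact hprod.integral_prod_left

lemma integrable_exp_affineAverage [IsProbabilityMeasure ρ] (hρ : IsCompactlySupported ρ)
    (hF : Continuous F) (hexp : Integrable fun x => Real.exp (F x)) :
    Integrable fun x => Real.exp (affineAverage ρ Λ F x) := by
  have hcont : Continuous (affineAverage ρ Λ F) := continuous_affineAverage hρ hF
  refine (integrable_affineAverage (ρ := ρ) (Λ := Λ) (by fun_prop) hexp).mono' (by fun_prop)
    (.of_forall fun x => ?_)
  rw [Real.norm_of_nonneg (Real.exp_pos _).le]
  exact convexOn_exp.map_integral_le Real.continuous_exp.continuousOn isClosed_univ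
    (.of_forall fun _ => mem_univ _) (integrable_add_mulVec hρ hF x)
    (integrable_add_mulVec hρ (Real.continuous_exp.comp hF) x)

-- The bound on the average of `V` says that translating `exp (-V)` costs at most a constant after
-- averaging in the exponent, and Jensen's inequality turns this into integrability.
lemma integrable_affineAverage_gibbs [IsProbabilityMeasure ρ] (hρ : IsCompactlySupported ρ)
    (hV : Continuous V) {β : ℝ} (hβ : ∀ x, affineAverage ρ Λ V x - V x ≤ β) (hF : Continuous F)
    (hF₀ : ∀ x, 0 ≤ F x) (hexp : Integrable (fun x => Real.exp (F x)) (gibbs V)) :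
    Integrable (affineAverage ρ Λ F) (gibbs V) := by
  have hexp' : Integrable fun x => Real.exp (F x - V x) := by
    simpa only [← Real.exp_add, neg_add_eq_sub] using (integrable_gibbs_iff hV).1 hexp
  have hcont : Continuous (affineAverage ρ Λ F) := continuous_affineAverage hρ hF
  refine (integrable_gibbs_iff hV).2
    (((integrable_exp_affineAverage (ρ := ρ) (Λ := Λ) hρ (hF.sub hV) hexp').const_mul
      (Real.exp β)).mono' (by fun_prop) (.of_forall fun x => ?_))
  have hsub : affineAverage ρ Λ (F - V) x =
      affineAverage ρ Λ F x - affineAverage ρ Λ V x :=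
    integral_sub (integrable_add_mulVec hρ hF x) (integrable_add_mulVec hρ hV x)
  have hnonneg : 0 ≤ affineAverage ρ Λ F x := integral_nonneg fun y => hF₀ _
  rw [Real.norm_of_nonneg (by positivity), hsub, ← Real.exp_add]
  calc Real.exp (-V x) * affineAverage ρ Λ F x
      ≤ Real.exp (-V x) * Real.exp (affineAverage ρ Λ F x) := by
        gcongr
        linarith [Real.add_one_le_exp (affineAverage ρ Λ F x)]
    _ = Real.exp (-V x + affineAverage ρ Λ F x) := (Real.exp_add _ _).symm
    _ ≤ Real.exp (β + (affineAverage ρ Λ F x - affineAverage ρ Λ V x)) :=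
        Real.exp_le_exp.2 (by linarith [hβ x])

lemma norm_gradVec_affineAverage_le [IsFiniteMeasure ρ] (hρ : IsCompactlySupported ρ)
    (hu : ContDiff ℝ 1 u) (x : Fin n → ℝ) :
    ‖gradVec (affineAverage ρ Λ u) x‖ ≤ affineAverage ρ Λ (fun z => ‖gradVec u z‖) x := by
  have hgrad := continuous_gradVec hu
  refine (pi_norm_le_iff_of_nonneg (integral_nonneg fun y => norm_nonneg _)).2 fun i => ?_
  rw [gradVec_affineAverage_apply hρ hu]
  exact norm_integral_le_of_norm_le (integrable_add_mulVec hρ hgrad.norm x)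
    (.of_forall fun y => norm_le_pi_norm (gradVec u _) i)

lemma IsSteinPair.integrable_gradVec_steinDifference (hst : IsSteinPair ρ σ κ)
    (h : IsBrenierPotential V W Φ) (hV : ContDiff ℝ 2 V) (hW : Continuous W)
    (hdom : conjugateDomain W = univ) {α : ℝ} (hα : ∀ x, (L * Lᵀ * hessMat V x).trace ≤ α)
    {s : ℝ} (hs : 0 < s) :
    Integrable (gradVec (steinDifference ρ κ L s Φ)) (gibbs V) := by
  have := hst.isProbabilityMeasure_left
  have hρ := hst.isCompactlySupported_left
  have hκ := hst.scale_pos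
  have hgrad := h.continuous_gradVec
  have hΦ₁ : ContDiff ℝ 1 Φ := h.contDiff.of_le one_le_two
  have hexp := h.integrable_exp_norm_gradVec hW hdom
  have hβ (x : Fin n → ℝ) : affineAverage ρ (s • L) V x - V x ≤ κ * s ^ 2 / 2 * α := by
    have hle := hst.steinDifference_le hV hα hs x
    rw [steinDifference, div_mul_eq_mul_div, div_le_iff₀ (by positivity)] at hle
    linarith
  have haverage := integrable_affineAverage_gibbs (F := fun x => ‖gradVec Φ x‖) hρ hV.continuous
    hβ hgrad.norm (fun x => norm_nonneg _) hexp
  have hΦ : Integrable (gradVec Φ) (gibbs V) :=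
    hexp.mono' hgrad.aestronglyMeasurable (.of_forall fun x => by
      linarith [Real.add_one_le_exp ‖gradVec Φ x‖])
  have hΦavg : Integrable (gradVec (affineAverage ρ (s • L) Φ)) (gibbs V) :=
    haverage.mono'
      (continuous_gradVec (contDiff_one_affineAverage hρ hΦ₁)).aestronglyMeasurable
      (.of_forall (norm_gradVec_affineAverage_le hρ hΦ₁))
  refine ((hΦavg.sub hΦ).smul (2 / (κ * s ^ 2))).congr (.of_forall fun x => ?_)
  exact (gradVec_steinDifference hρ h.contDiff s x).symm

end Integrability

section Contraction

variable {n : ℕ} {V W Φ u : (Fin n → ℝ) → ℝ} {L G : Matrix (Fin n) (Fin n) ℝ}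

lemma trace_mul_transpose_mul_pos (hG : G.PosDef) (hL : L ≠ 0) : 0 < (L * Lᵀ * G).trace := by
  obtain ⟨j, hj⟩ : ∃ j, L.col j ≠ 0 := by
    by_contra! h
    exact hL (ext_col h)
  have htrace : (L * Lᵀ * G).trace = ∑ k, L.col k ⬝ᵥ (G *ᵥ L.col k) := by
    rw [Matrix.mul_assoc, trace_mul_comm, Matrix.mul_assoc]
    rfl
  rw [htrace]
  exact Finset.sum_pos' (fun k _ => by simpa using hG.posSemidef.dotProduct_mulVec_nonneg (L.col k))
    ⟨j, Finset.mem_univ j, by simpa using hG.dotProduct_mulVec_pos hj⟩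

lemma eq_zero_of_integral_gibbs_nonpos {f : (Fin n → ℝ) → ℝ} (hV : Continuous V)
    (hf : Continuous f) (hf₀ : 0 ≤ f) (hfi : Integrable f (gibbs V))
    (hint : ∫ x, f x ∂gibbs V ≤ 0) : f = 0 := by
  have hae : f =ᵐ[gibbs V] 0 :=
    (integral_eq_zero_iff_of_nonneg hf₀ hfi).1 (hint.antisymm (integral_nonneg hf₀))
  exact (hf.ae_eq_iff_eq volume continuous_zero).1
    ((volume_absolutelyContinuous_gibbs hV).ae_eq hae)

namespace IsBrenierPotential

lemma integral_comp_mul_nonpos_of_le_linearizedMA (h : IsBrenierPotential V W Φ)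
    (hV : Continuous V) (hW : ContDiff ℝ 1 W) [IsFiniteMeasure (gibbs V)] {γ : ℝ → ℝ}
    (hγ : ContDiff ℝ 1 γ) (hγm : Monotone γ) (hγ01 : ∀ t, γ t ∈ Icc (0 : ℝ) 1)
    (hu : ContDiff ℝ 2 u) (hgrad : Integrable (gradVec u) (gibbs V)) {g : (Fin n → ℝ) → ℝ}
    (hg : Continuous g) {b : ℝ} (hb : ∀ x, -b ≤ g x)
    (hle : ∀ x, g x ≤ linearizedMA W Φ u x) :
    Integrable (fun x => γ (u x) * g x) (gibbs V) ∧ ∫ x, γ (u x) * g x ∂gibbs V ≤ 0 := by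
  obtain ⟨hint, hnonpos⟩ := h.integral_comp_mul_linearizedMA_nonpos hV hW hγ hγm hγ01 hu hgrad
    fun x => (hb x).trans (hle x)
  have hupper (x : Fin n → ℝ) : γ (u x) * g x ≤ γ (u x) * linearizedMA W Φ u x :=
    mul_le_mul_of_nonneg_left (hle x) (hγ01 _).1
  have hgi : Integrable (fun x => γ (u x) * g x) (gibbs V) :=
    integrable_of_le_of_le ((hγ.continuous.comp hu.continuous).mul hg).aestronglyMeasurable
      (.of_forall fun x => neg_abs_le_mul (hγ01 _) (hb x)) (.of_forall hupper)
      (integrable_const _) hint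
  exact ⟨hgi, (integral_mono hgi hint hupper).trans hnonpos⟩

lemma integral_comp_mul_sq_trace_nonpos (h : IsBrenierPotential V W Φ)
    (hV : ContDiff ℝ 2 V) (hW : ContDiff ℝ 2 W) [IsFiniteMeasure (gibbs V)]
    (hG : G.PosDef) (hK : ∀ x, (hessMat W x - G⁻¹).PosSemidef) {α : ℝ}
    (hα : ∀ x, (L * Lᵀ * hessMat V x).trace ≤ α) (hc : 0 < (L * Lᵀ * G).trace) {γ : ℝ → ℝ}
    (hγ : ContDiff ℝ 1 γ) (hγm : Monotone γ) (hγ01 : ∀ t, γ t ∈ Icc (0 : ℝ) 1) :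
    let q := fun x => (L * Lᵀ * hessMat Φ x).trace
    Integrable (fun x => γ (q x) * (q x ^ 2 / (L * Lᵀ * G).trace - α)) (gibbs V) ∧
      ∫ x, γ (q x) * (q x ^ 2 / (L * Lᵀ * G).trace - α) ∂gibbs V ≤ 0 := by
  intro q
  obtain ⟨ρ, σ, κ, hst⟩ := exists_isSteinPair n
  have := hst.isProbabilityMeasure_left
  have := hst.isProbabilityMeasure_right
  have hσ := hst.isCompactlySupported_right
  have hqc : Continuous q := continuous_trace_mul_hessMat h.contDiff (L * Lᵀ)
  let s (k : ℕ) : ℝ := 1 / (k + 1)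
  have hs (k : ℕ) : 0 < s k := by positivity
  have hs₀ : Tendsto s atTop (𝓝[>] 0) :=
    tendsto_nhdsWithin_iff.2 ⟨tendsto_one_div_add_atTop_nhds_zero_nat, .of_forall hs⟩
  let u (k : ℕ) : (Fin n → ℝ) → ℝ := steinDifference ρ κ L (s k) Φ
  let g (k : ℕ) (x : Fin n → ℝ) : ℝ :=
    affineAverage σ (s k • L) q x ^ 2 / (L * Lᵀ * G).trace - α
  have hg (k : ℕ) : Continuous (g k) :=
    (((continuous_affineAverage hσ hqc).pow 2).div_const _).sub continuous_const
  have hlower (k : ℕ) (x : Fin n → ℝ) : -α ≤ g k x := by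
    linarith [div_nonneg (sq_nonneg (affineAverage σ (s k • L) q x)) hc.le]
  have hbound (k : ℕ) : Integrable (fun x => γ (u k x) * g k x) (gibbs V) ∧
      ∫ x, γ (u k x) * g k x ∂gibbs V ≤ 0 :=
    h.integral_comp_mul_nonpos_of_le_linearizedMA hV.continuous (hW.of_le one_le_two) hγ hγm hγ01
      (contDiff_steinDifference hst.isCompactlySupported_left h.contDiff _)
      (hst.integrable_gradVec_steinDifference h hV hW.continuous
        (conjugateDomain_eq_univ hW hG hK) hα (hs k)) (hg k) (hlower k)
      (hst.sq_affineAverage_div_sub_le_linearizedMA h hV hW hG hK hα hc (hs k))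
  refine integrable_and_integral_le_of_tendsto (F := fun k x => γ (u k x) * g k x)
    (fun k => (hbound k).1) (fun k x => neg_abs_le_mul (hγ01 _) (hlower k x))
    (fun k => (hbound k).2) (fun x => ?_) tendsto_const_nhds
  have hu : Tendsto (fun k => u k x) atTop (𝓝 (q x)) :=
    (hst.tendsto_steinDifference h.contDiff x).comp hs₀
  have hQ : Tendsto (fun k => affineAverage σ (s k • L) q x) atTop (𝓝 (q x)) :=
    ((tendsto_affineAverage_smul hσ hqc x).mono_left nhdsWithin_le_nhds).comp hs₀
  exact ((hγ.continuous.tendsto _).comp hu).mul (((hQ.pow 2).div_const _).sub_const α)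

-- The cutoff `γ` vanishes up to the level beyond which `t² / Tr(AG) - α` is positive, so the
-- integrand in `integral_comp_mul_sq_trace_nonpos` is nonnegative and must vanish identically.
lemma trace_mul_hessMat_le_sqrt (h : IsBrenierPotential V W Φ)
    (hV : ContDiff ℝ 2 V) (hW : ContDiff ℝ 2 W) [IsFiniteMeasure (gibbs V)]
    (hG : G.PosDef) (hK : ∀ x, (hessMat W x - G⁻¹).PosSemidef) {α : ℝ}
    (hα : ∀ x, (L * Lᵀ * hessMat V x).trace ≤ α) (hc : 0 < (L * Lᵀ * G).trace) (x : Fin n → ℝ) :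
    (L * Lᵀ * hessMat Φ x).trace ≤ √(α * (L * Lᵀ * G).trace) := by
  set c := (L * Lᵀ * G).trace
  let γ (t : ℝ) : ℝ := Real.smoothTransition (t - √(α * c))
  have hγ : ContDiff ℝ 1 γ := Real.smoothTransition.contDiff.comp (contDiff_id.sub contDiff_const)
  have hγm : Monotone γ := fun t₁ t₂ ht => Real.smoothTransition.monotone (sub_le_sub_right ht _)
  have hγ01 (t : ℝ) : γ t ∈ Icc (0 : ℝ) 1 :=
    ⟨Real.smoothTransition.nonneg _, Real.smoothTransition.le_one _⟩
  have hexcess {t : ℝ} (ht : √(α * c) < t) : 0 < γ t * (t ^ 2 / c - α) :=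
    mul_pos (Real.smoothTransition.pos_of_pos (sub_pos.2 ht)) <| sub_pos.2 <| (lt_div_iff₀ hc).2 <|
      (Real.sqrt_lt' ((Real.sqrt_nonneg _).trans_lt ht)).1 ht
  have hnonneg (t : ℝ) : 0 ≤ γ t * (t ^ 2 / c - α) := by
    rcases le_or_gt t √(α * c) with ht | ht
    · simp [γ, Real.smoothTransition.zero_of_nonpos (sub_nonpos.2 ht)]
    · exact (hexcess ht).le
  have htrace := continuous_trace_mul_hessMat h.contDiff (L * Lᵀ)
  obtain ⟨hfi, hint⟩ := h.integral_comp_mul_sq_trace_nonpos hV hW hG hK hα hc hγ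
    hγm hγ01
  have hzero := eq_zero_of_integral_gibbs_nonpos hV.continuous
    ((hγ.continuous.comp htrace).mul (((htrace.pow 2).div_const c).sub continuous_const))
    (fun x => hnonneg _) hfi hint
  exact le_of_not_gt fun hlt => (hexcess hlt).ne' (congrFun hzero x)

end IsBrenierPotential

end Contraction

/-- Anisotropic contraction theorem of de Philippis–Shenfeld type:
`div(A ∇V) ≤ α` and `∇²W ≥ G⁻¹` imply `‖div(A ∇Φ)‖_∞ ≤ √(α · Tr(AG))` for the
Brenier map `∇Φ` from `e^{-V} dx` to `e^{-W} dx`. -/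
theorem divergence_contraction
    {n : ℕ} (V W : (Fin n → ℝ) → ℝ)
    (hVc2 : ContDiff ℝ 2 V) (hWc2 : ContDiff ℝ 2 W)
    (hμ : IsProbabilityMeasure
      (volume.withDensity fun x : Fin n → ℝ => ENNReal.ofReal (Real.exp (-V x))))
    (hν : IsProbabilityMeasure
      (volume.withDensity fun x : Fin n → ℝ => ENNReal.ofReal (Real.exp (-W x))))
    (α : ℝ) (hα : 0 < α)
    (A : Matrix (Fin n) (Fin n) ℝ) (hA : A.PosSemidef)
    (G : Matrix (Fin n) (Fin n) ℝ) (hG : G.PosDef)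
    (hdivV : ∀ x, (A * hessMat V x).trace ≤ α)
    (hhessW : ∀ x, (hessMat W x - G⁻¹).PosSemidef)
    (Φ : (Fin n → ℝ) → ℝ)
    (hΦc2 : ContDiff ℝ 2 Φ) (hΦconv : ConvexOn ℝ Set.univ Φ)
    (htransport : Measure.map (gradVec Φ)
        (volume.withDensity fun x : Fin n → ℝ => ENNReal.ofReal (Real.exp (-V x))) =
      volume.withDensity fun x : Fin n → ℝ => ENNReal.ofReal (Real.exp (-W x))) :
    ∀ x, (A * hessMat Φ x).trace ≤ Real.sqrt (α * (A * G).trace) := by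
  intro x
  have : IsProbabilityMeasure (gibbs V) := hμ
  have h : IsBrenierPotential V W Φ := ⟨hΦc2, hΦconv, htransport⟩
  obtain ⟨L, rfl⟩ := exists_eq_mul_transpose hA
  rcases eq_or_ne L 0 with rfl | hL
  · simp
  · have hpos := trace_mul_transpose_mul_pos hG hL
    exact h.trace_mul_hessMat_le_sqrt hVc2 hWc2 hG hhessW hdivV hpos x
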